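/- Let n ≥ 3 and let w be a smooth solution of □w = F on ℝ₊ × ℝⁿ which vanishes for large |x| for each t. Then for every δ > 0 there is a constant C (independent of T and w) such that for all T > 0, ‖⟨x⟩^{−1/2−δ} w'‖_{L²_{t,x}([0,T]×ℝⁿ)} ≤ C ( ‖w'(0,·)‖_{L²(ℝⁿ)} + ∫₀^T ‖□w(s,·)‖_{L²(ℝⁿ)} ds ). -/

import Mathlib

/-!
Pair the equation with the Morawetz multiplier `q (x · ∇u + (n - 1)/2 u)`, where
`q = (ρ² + |x|²)^{-1/2}`. This writes `□u` times the multiplier as a space-time divergence plus a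
bulk term which, for `n ≥ 3`, is at least `½ ρ² q³ (u_t² + |∇u|²)`; the current is controlled by the
energy, by means of Hardy's inequality. Together with the energy inequality this bounds
`∫∫ ρ² q³ |u'|²` by the square of the right-hand side, uniformly in the scale `ρ`. Since
`⟨x⟩^{-1-2δ} ≲ 2^{-2δk} ρ² q³` where `ρ = 2^k ≤ ⟨x⟩ < 2^{k+1}`, the sum over the dyadic scales
converges.

The radius of the support of `u (t, ·)` need not be locally bounded in `t`. Hence neither estimate
integrates by parts over the whole space: both are localized by a cutoff to the backward cone
`{⟨x⟩ + t ≤ R}`, through whose boundary the energy only leaves, and then `R → ∞`.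
-/

open MeasureTheory Real Set
open scoped ENNReal FourierTransform

noncomputable section

/-- Euclidean space ℝⁿ. -/
abbrev Eu (n : ℕ) : Type := EuclideanSpace ℝ (Fin n)

/-- Spatial partial derivative ∂_i of a function on ℝⁿ. -/
def sd {n : ℕ} (i : Fin n) (h : Eu n → ℝ) : Eu n → ℝ :=
  fun x => fderiv ℝ h x (EuclideanSpace.single i 1)

/-- Iterated spatial derivatives ∂_x^μ. -/
def sdIter {n : ℕ} : {m : ℕ} → (Fin m → Fin n) → (Eu n → ℝ) → Eu n → ℝ
  | 0, _, h => h
  | m + 1, μ, h => sd (μ 0) (sdIter (fun i : Fin m => μ i.succ) h)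

/-- Time derivative ∂_t of u(t,x). -/
def td {n : ℕ} (u : ℝ → Eu n → ℝ) : ℝ → Eu n → ℝ :=
  fun t x => deriv (fun s => u s x) t

/-- Space-time partial derivative ∂_α, with ∂₀ = ∂_t. -/
def pd {n : ℕ} (α : Fin (n + 1)) (u : ℝ → Eu n → ℝ) : ℝ → Eu n → ℝ :=
  if h : α = 0 then td u else fun t x => sd (α.pred h) (u t) x

/-- Iterated space-time derivatives ∂^μ. -/
def pdIter {n : ℕ} : {m : ℕ} → (Fin m → Fin (n + 1)) → (ℝ → Eu n → ℝ) → ℝ → Eu n → ℝ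
  | 0, _, u => u
  | m + 1, μ, u => pd (μ 0) (pdIter (fun i : Fin m => μ i.succ) u)

/-- Iterated spatial derivatives of a space-time function. -/
def sdIterT {n m : ℕ} (μ : Fin m → Fin n) (u : ℝ → Eu n → ℝ) : ℝ → Eu n → ℝ :=
  fun t x => sdIter μ (u t) x

/-- The d'Alembertian □ = ∂_t² − Δ. -/
def dAlembert {n : ℕ} (u : ℝ → Eu n → ℝ) : ℝ → Eu n → ℝ :=
  fun t x => td (td u) t x - ∑ i : Fin n, sd i (sd i (u t)) x

/-- |u'| : the magnitude of the space-time gradient (∂_t u, ∇_x u). -/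
def gradMag {n : ℕ} (u : ℝ → Eu n → ℝ) : ℝ → Eu n → ℝ :=
  fun t x => Real.sqrt (∑ α : Fin (n + 1), pd α u t x ^ 2)

/-- Smoothness of a space-time function. -/
def SmoothTX {n : ℕ} (u : ℝ → Eu n → ℝ) : Prop :=
  ContDiff ℝ (⊤ : ℕ∞) fun p : ℝ × Eu n => u p.1 p.2

/-- L² norm over a region S ⊆ ℝⁿ. -/
def L2x {n : ℕ} (S : Set (Eu n)) (f : Eu n → ℝ) : ℝ≥0∞ :=
  eLpNorm f 2 (volume.restrict S)

/-- Space-time L² norm over [0,T] × S. -/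
def L2st {n : ℕ} (T : ℝ) (S : Set (Eu n)) (u : ℝ → Eu n → ℝ) : ℝ≥0∞ :=
  eLpNorm (fun p : ℝ × Eu n => u p.1 p.2) 2
    ((volume.restrict (Icc 0 T)).prod (volume.restrict S))

/-- Japanese bracket ⟨x⟩ = (1+|x|²)^{1/2}. -/
def jap {n : ℕ} (x : Eu n) : ℝ := Real.sqrt (1 + ‖x‖ ^ 2)

/-- Homogeneous Sobolev norm ‖f‖_{Ḣ^s} = ‖ |ξ|^s 𝓕f(ξ) ‖_{L²}. -/
def sobolevHom {n : ℕ} (s : ℝ) (f : Eu n → ℝ) : ℝ≥0∞ :=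
  eLpNorm (fun ξ : Eu n => ‖ξ‖ ^ s * ‖𝓕 (fun x : Eu n => (f x : ℂ)) ξ‖) 2 volume

/-- A smooth compact obstacle K = {ρ ≤ 0} given by a smooth defining function. -/
structure SmoothObstacle (n : ℕ) where
  ρ : Eu n → ℝ
  smooth : ContDiff ℝ (⊤ : ℕ∞) ρ
  K : Set (Eu n)
  K_def : K = {x | ρ x ≤ 0}
  compact : IsCompact K
  grad_ne : ∀ x, ρ x = 0 → fderiv ℝ ρ x ≠ 0

/-- Ordered pairs (j,k), j < k, indexing the rotation fields Ω_{jk} on ℝ⁴. -/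
abbrev OP : Type := {p : Fin 4 × Fin 4 // p.1 < p.2}

/-- Rotation vector field Ω_{jk} = x_j ∂_k − x_k ∂_j. -/
def rot (j k : Fin 4) (h : Eu 4 → ℝ) : Eu 4 → ℝ :=
  fun x => x j * sd k h x - x k * sd j h x

/-- Products Ω^μ of rotation vector fields. -/
def rotIter : {m : ℕ} → (Fin m → OP) → (Eu 4 → ℝ) → Eu 4 → ℝ
  | 0, _, h => h
  | m + 1, μ, h => rot (μ 0).1.1 (μ 0).1.2 (rotIter (fun i : Fin m => μ i.succ) h)

/-- Radial derivative ∇_r = (x/|x|)·∇. -/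
def radialD (h : Eu 4 → ℝ) : Eu 4 → ℝ :=
  fun x => fderiv ℝ h x (‖x‖⁻¹ • x)

/-- Iterated radial derivatives ∇_r^j. -/
def radialIter : ℕ → (Eu 4 → ℝ) → Eu 4 → ℝ
  | 0, h => h
  | j + 1, h => radialD (radialIter j h)

/-- Magnitude of the spatial gradient ∇_x h. -/
def spGradMag (h : Eu 4 → ℝ) : Eu 4 → ℝ :=
  fun x => Real.sqrt (∑ i : Fin 4, sd i h x ^ 2)

/-- Index set for the fields Z = {∂_α, Ω_{jk}}. -/
abbrev ZIdx : Type := Fin 5 ⊕ OP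

/-- Action of a single field Z. -/
def applyZ : ZIdx → (ℝ → Eu 4 → ℝ) → ℝ → Eu 4 → ℝ
  | Sum.inl α, u => pd (n := 4) α u
  | Sum.inr p, u => fun t x => rot p.1.1 p.1.2 (u t) x

/-- Products Z^μ of the fields Z. -/
def ZIter : {m : ℕ} → (Fin m → ZIdx) → (ℝ → Eu 4 → ℝ) → ℝ → Eu 4 → ℝ
  | 0, _, u => u
  | m + 1, μ, u => applyZ (μ 0) (ZIter (fun i : Fin m => μ i.succ) u)

/-- The perturbed d'Alembertian □_h φ = □φ + h^{αβ} ∂_α ∂_β φ. -/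
def boxH (h : Fin 5 → Fin 5 → ℝ → Eu 4 → ℝ) (φ : ℝ → Eu 4 → ℝ) : ℝ → Eu 4 → ℝ :=
  fun t x => dAlembert φ t x
    + ∑ α : Fin 5, ∑ β : Fin 5, h α β t x * pd (n := 4) α (pd (n := 4) β φ) t x

/-- |h| = Σ_{α,β} |h^{αβ}|. -/
def habs (h : Fin 5 → Fin 5 → ℝ → Eu 4 → ℝ) : ℝ → Eu 4 → ℝ :=
  fun t x => ∑ α : Fin 5, ∑ β : Fin 5, |h α β t x|

/-- |∂h| = Σ_{α,β,γ} |∂_γ h^{αβ}|. -/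
def dhabs (h : Fin 5 → Fin 5 → ℝ → Eu 4 → ℝ) : ℝ → Eu 4 → ℝ :=
  fun t x => ∑ γ : Fin 5, ∑ α : Fin 5, ∑ β : Fin 5, |pd (n := 4) γ (h α β) t x|

/-- Mixed norm ‖G‖_{L¹_t L¹_r L²_ω(ℝ₊×ℝ⁴)}. -/
def mixedNorm (G : ℝ → Eu 4 → ℝ) : ℝ≥0∞ :=
  ∫⁻ t in Ioi (0 : ℝ), ∫⁻ r in Ioi (0 : ℝ),
    eLpNorm (fun ω : Metric.sphere (0 : Eu 4) 1 => G t (r • (ω : Eu 4))) 2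
        (volume : Measure (Eu 4)).toSphere
      * ENNReal.ofReal (r ^ 3)

/-- The quantity M(T) (for `kmax = 50`) and A(T) (for `kmax = 49`) from the iteration. -/
def Mgen (kmax : ℕ) (Kc : Set (Eu 4)) (δ : ℝ) (u : ℝ → Eu 4 → ℝ) (T : ℝ) : ℝ≥0∞ :=
  (∑ m ∈ Finset.range (kmax + 1), ∑ μ : Fin m → Fin 5,
      ((⨆ t ∈ Icc (0 : ℝ) T, L2x Kc fun x => gradMag (pdIter (n := 4) μ u) t x)
        + L2st T Kc fun t x => jap x ^ (-(1/2 : ℝ) - δ) * gradMag (pdIter (n := 4) μ u) t x))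
  + (∑ m ∈ Finset.range kmax, ∑ μ : Fin m → ZIdx,
      ((L2st T Kc fun t x => jap x ^ (-(1/2 : ℝ) - δ) * gradMag (ZIter μ u) t x)
        + (L2st T (Kc ∩ {x : Eu 4 | 2 < ‖x‖}) fun t x =>
            jap x ^ (-(1/2 : ℝ) - 2*δ) * ZIter μ u t x)
        + ⨆ t ∈ Icc (0 : ℝ) T, L2x Kc fun x => gradMag (ZIter μ u) t x))
  + L2st T (Kc ∩ {x : Eu 4 | ‖x‖ < 3}) u

/-- The data (f,g) satisfy the compatibility conditions to infinite order for the
Dirichlet problem □u = Q(u) on the exterior of {ρ ≤ 0}: there is a smooth function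
attaining the data, vanishing on the boundary, and solving the equation
to infinite order at t = 0 (its Taylor coefficients at t = 0 are the formal ψ_k). -/
def CompatInfty {n : ℕ} (ρ : Eu n → ℝ) (f g : Eu n → ℝ)
    (Q : (ℝ → Eu n → ℝ) → ℝ → Eu n → ℝ) : Prop :=
  ∃ U : ℝ → Eu n → ℝ, SmoothTX U ∧ (∀ x, U 0 x = f x) ∧ (∀ x, td U 0 x = g x) ∧
    (∀ t x, ρ x = 0 → U t x = 0) ∧
    ∀ k : ℕ, ∀ x, 0 ≤ ρ x → td^[k] (fun s y => dAlembert U s y - Q U s y) 0 x = 0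

/-- The general quasilinear nonlinearity Q(u,u',u'') = A(u,u') + B^{αβ}(u,u') ∂_α∂_β u. -/
def Qnl {n : ℕ} (A : ℝ × (Fin (n + 1) → ℝ) → ℝ)
    (B : Fin (n + 1) → Fin (n + 1) → ℝ × (Fin (n + 1) → ℝ) → ℝ)
    (u : ℝ → Eu n → ℝ) : ℝ → Eu n → ℝ :=
  fun t x => A (u t x, fun α => pd α u t x)
    + ∑ α, ∑ β, B α β (u t x, fun γ => pd γ u t x) * pd α (pd β u) t x

/-- The quadratically truncated nonlinearity, evaluated on the pair (v,w);
the iteration RHS is `iterRHS a b A B u_{l-1} u_l`. -/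
def iterRHS (a : Fin 5 → ℝ) (b A : Fin 5 → Fin 5 → ℝ) (B : Fin 5 → Fin 5 → Fin 5 → ℝ)
    (v w : ℝ → Eu 4 → ℝ) : ℝ → Eu 4 → ℝ :=
  fun t x => (∑ α : Fin 5, a α * v t x * pd (n := 4) α v t x)
    + (∑ α : Fin 5, ∑ β : Fin 5, b α β * pd (n := 4) α v t x * pd (n := 4) β v t x)
    + (∑ α : Fin 5, ∑ β : Fin 5, A α β * v t x * pd (n := 4) α (pd (n := 4) β w) t x)
    + (∑ α : Fin 5, ∑ β : Fin 5, ∑ γ : Fin 5,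
        B α β γ * pd (n := 4) α v t x * pd (n := 4) β (pd (n := 4) γ w) t x)

local notation "Smooth" => ContDiff ℝ (⊤ : ℕ∞)

section DirectionalDerivative

variable {E : Type*} [NormedAddCommGroup E] [NormedSpace ℝ E] {f g : E → ℝ}

/-- The derivative of `f` in the direction `v`, as a function of the base point. -/
def dirDeriv (v : E) (f : E → ℝ) : E → ℝ := fun p => fderiv ℝ f p v

@[fun_prop]
lemma contDiff_dirDeriv (hf : Smooth f) (v : E) :
    Smooth (dirDeriv v f) :=
  (hf.fderiv_right (m := (⊤ : ℕ∞)) (by simp)).clm_apply contDiff_const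

variable {v p : E}

@[fun_prop]
lemma differentiableAt_of_smooth (hf : Smooth f) : DifferentiableAt ℝ f p :=
  hf.differentiable (by simp) p

lemma dirDeriv_add (hf : DifferentiableAt ℝ f p) (hg : DifferentiableAt ℝ g p) :
    dirDeriv v (fun p => f p + g p) p = dirDeriv v f p + dirDeriv v g p := by
  simp [dirDeriv, fderiv_fun_add hf hg]

lemma dirDeriv_sub (hf : DifferentiableAt ℝ f p) (hg : DifferentiableAt ℝ g p) :
    dirDeriv v (fun p => f p - g p) p = dirDeriv v f p - dirDeriv v g p := by
  simp [dirDeriv, fderiv_fun_sub hf hg]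

lemma dirDeriv_mul (hf : DifferentiableAt ℝ f p) (hg : DifferentiableAt ℝ g p) :
    dirDeriv v (fun p => f p * g p) p = dirDeriv v f p * g p + f p * dirDeriv v g p := by
  simp [dirDeriv, fderiv_fun_mul hf hg]
  ring

lemma dirDeriv_const_mul (hf : DifferentiableAt ℝ f p) (c : ℝ) :
    dirDeriv v (fun p => c * f p) p = c * dirDeriv v f p := by
  simp [dirDeriv, fderiv_const_mul hf]

lemma dirDeriv_pow (hf : DifferentiableAt ℝ f p) (k : ℕ) :
    dirDeriv v (fun p => f p ^ k) p = k * f p ^ (k - 1) * dirDeriv v f p := by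
  simp [dirDeriv, fderiv_fun_pow k hf]

lemma dirDeriv_sum {ι : Type*} {s : Finset ι} {f : ι → E → ℝ}
    (hf : ∀ i ∈ s, DifferentiableAt ℝ (f i) p) :
    dirDeriv v (fun p => ∑ i ∈ s, f i p) p = ∑ i ∈ s, dirDeriv v (f i) p := by
  simp [dirDeriv, fderiv_fun_sum hf]

lemma dirDeriv_comm (hf : Smooth f) (v w p : E) :
    dirDeriv v (dirDeriv w f) p = dirDeriv w (dirDeriv v f) p := by
  have hsymm : IsSymmSndFDerivAt ℝ f p :=
    hf.contDiffAt.isSymmSndFDerivAt (by simpa using WithTop.coe_le_coe.2 (le_top (a := (2 : ℕ∞))))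
  have hfderiv : Differentiable ℝ (fderiv ℝ f) :=
    (hf.fderiv_right (m := (⊤ : ℕ∞)) (by simp)).differentiable (by simp)
  have hsnd (a b : E) : dirDeriv a (dirDeriv b f) p = fderiv ℝ (fderiv ℝ f) p a b := by
    unfold dirDeriv
    simp [fderiv_clm_apply (hfderiv p) (differentiableAt_const b)]
  rw [hsnd, hsnd, hsymm.eq]

lemma dirDeriv_eq_zero_of_eventuallyEq {p : E} (h : f =ᶠ[nhds p] 0) (v : E) :
    dirDeriv v f p = 0 := by
  simp [dirDeriv, h.fderiv_eq]

end DirectionalDerivative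

section Bracket

variable {H : Type*} [NormedAddCommGroup H] {ρ : ℝ}

/-- The radial weight `(ρ² + ‖x‖²)^{-1/2}`, the inverse of the Japanese bracket at scale `ρ`. -/
def invBracket (ρ : ℝ) (x : H) : ℝ := (√(ρ ^ 2 + ‖x‖ ^ 2))⁻¹

lemma invBracket_pos (hρ : ρ ≠ 0) (x : H) : 0 < invBracket ρ x := by
  unfold invBracket; positivity

lemma invBracket_sq_mul (hρ : ρ ≠ 0) (x : H) :
    invBracket ρ x ^ 2 * (ρ ^ 2 + ‖x‖ ^ 2) = 1 := by
  rw [invBracket, inv_pow, Real.sq_sqrt (by positivity)]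
  exact inv_mul_cancel₀ (by positivity)

variable [InnerProductSpace ℝ H]

@[fun_prop]
lemma contDiff_invBracket (hρ : ρ ≠ 0) : Smooth (invBracket ρ : H → ℝ) := by
  have hpos (x : H) : ρ ^ 2 + ‖x‖ ^ 2 ≠ 0 := by positivity
  exact ((contDiff_const.add (contDiff_norm_sq ℝ)).sqrt hpos).inv fun x => by positivity

lemma hasFDerivAt_sqrt_sq_add_norm_sq (hρ : ρ ≠ 0) (x : H) :
    HasFDerivAt (fun x : H => √(ρ ^ 2 + ‖x‖ ^ 2)) (invBracket ρ x • innerSL ℝ x) x := by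
  convert ((hasStrictFDerivAt_norm_sq x).hasFDerivAt.const_add (ρ ^ 2)).sqrt (by positivity) using 1
  ext y
  simp [invBracket]
  ring

lemma hasFDerivAt_invBracket (hρ : ρ ≠ 0) (x : H) :
    HasFDerivAt (invBracket ρ) (-(invBracket ρ x ^ 3) • innerSL ℝ x) x := by
  have hne : √(ρ ^ 2 + ‖x‖ ^ 2) ≠ 0 := by positivity
  refine ((hasDerivAt_inv hne).comp_hasFDerivAt x
    (hasFDerivAt_sqrt_sq_add_norm_sq hρ x)).congr_fderiv ?_
  rw [smul_smul, invBracket]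
  congr 1
  ring

end Bracket

section SpaceTime

variable {n : ℕ} {ρ : ℝ} {u f : ℝ × Eu n → ℝ}

local notation "∂ₜ" => dirDeriv ((1, 0) : ℝ × Eu _)
local notation "∂ₓ[" i "]" => dirDeriv ((0, EuclideanSpace.single i 1) : ℝ × Eu _)

lemma dirDeriv_coord (i : Fin n) (v p : ℝ × Eu n) :
    dirDeriv v (fun p => p.2 i) p = v.2 i := by
  have := ((EuclideanSpace.proj i : Eu n →L[ℝ] ℝ) ∘L .snd ℝ ℝ (Eu n)).fderiv (x := p)
  exact congrArg (fun L => L v) this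

lemma dirDeriv_invBracket (hρ : ρ ≠ 0) (v p : ℝ × Eu n) :
    dirDeriv v (fun p => invBracket ρ p.2) p = -(invBracket ρ p.2 ^ 3 * inner ℝ p.2 v.2) := by
  have := ((hasFDerivAt_invBracket hρ p.2).comp p hasFDerivAt_snd).fderiv
  simpa [dirDeriv, Function.comp_def] using congrArg (fun L => L v) this

/-- The scaling field `x · ∇` applied to `u`. -/
def scalingDeriv (u : ℝ × Eu n → ℝ) : ℝ × Eu n → ℝ := fun p => ∑ i, p.2 i * ∂ₓ[i] u p

@[fun_prop]
lemma contDiff_scalingDeriv (hu : Smooth u) : Smooth (scalingDeriv u) := by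
  unfold scalingDeriv; fun_prop

lemma dirDeriv_scalingDeriv (hu : Smooth u) (v p : ℝ × Eu n) :
    dirDeriv v (scalingDeriv u) p
      = ∑ i, v.2 i * ∂ₓ[i] u p + scalingDeriv (dirDeriv v u) p := by
  unfold scalingDeriv
  rw [dirDeriv_sum (fun i _ => by fun_prop), ← Finset.sum_add_distrib]
  refine Finset.sum_congr rfl fun i _ => ?_
  rw [dirDeriv_mul (by fun_prop) (by fun_prop), dirDeriv_coord, dirDeriv_comm hu]

lemma sum_dirDeriv_coord_mul_invBracket_pow (hρ : ρ ≠ 0) {p : ℝ × Eu n}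
    (hf : DifferentiableAt ℝ f p) (m : ℕ) :
    ∑ j, ∂ₓ[j] (fun p => p.2 j * (invBracket ρ p.2 ^ m * f p)) p
      = ((n - m) * invBracket ρ p.2 ^ m + m * ρ ^ 2 * invBracket ρ p.2 ^ (m + 2)) * f p
        + invBracket ρ p.2 ^ m * scalingDeriv f p := by
  set q := invBracket ρ p.2 with hq
  have hterm (j : Fin n) : ∂ₓ[j] (fun p => p.2 j * (invBracket ρ p.2 ^ m * f p)) p
      = q ^ m * f p - m * q ^ (m + 2) * f p * p.2 j ^ 2 + q ^ m * (p.2 j * ∂ₓ[j] f p) := by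
    rw [dirDeriv_mul (by fun_prop) (by fun_prop), dirDeriv_coord,
      dirDeriv_mul (by fun_prop) (by fun_prop),
      dirDeriv_pow (by fun_prop), dirDeriv_invBracket hρ]
    rcases m with _ | m <;> simp [← hq, EuclideanSpace.inner_single_right]
    ring
  have hq2 : q ^ 2 * ‖p.2‖ ^ 2 = 1 - ρ ^ 2 * q ^ 2 := by linarith [invBracket_sq_mul hρ p.2]
  simp only [hterm, Finset.sum_add_distrib, Finset.sum_sub_distrib, ← Finset.mul_sum,
    ← EuclideanSpace.real_norm_sq_eq, scalingDeriv, Finset.sum_const, Finset.card_univ,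
    Fintype.card_fin, nsmul_eq_mul]
  linear_combination (-m * q ^ m * f p) * hq2

/-! ### The Morawetz identity -/

/-- The d'Alembertian of a function on space-time. -/
def waveOp (u : ℝ × Eu n → ℝ) : ℝ × Eu n → ℝ :=
  fun p => ∂ₜ (∂ₜ u) p - ∑ i, ∂ₓ[i] (∂ₓ[i] u) p

/-- The squared length `|∇ₓu|²` of the spatial gradient. -/
def gradSq (u : ℝ × Eu n → ℝ) : ℝ × Eu n → ℝ := fun p => ∑ i, ∂ₓ[i] u p ^ 2

/-- The energy density `|u'|² = (∂ₜu)² + |∇ₓu|²`. -/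
def energyDensity (u : ℝ × Eu n → ℝ) : ℝ × Eu n → ℝ := fun p => ∂ₜ u p ^ 2 + gradSq u p

/-- The Lagrangian density `(∂ₜu)² - |∇ₓu|²`. -/
def lagrangian (u : ℝ × Eu n → ℝ) : ℝ × Eu n → ℝ := fun p => ∂ₜ u p ^ 2 - gradSq u p

@[fun_prop]
lemma contDiff_waveOp (hu : Smooth u) : Smooth (waveOp u) := by unfold waveOp; fun_prop

@[fun_prop]
lemma contDiff_gradSq (hu : Smooth u) : Smooth (gradSq u) := by unfold gradSq; fun_prop

@[fun_prop]
lemma contDiff_energyDensity (hu : Smooth u) : Smooth (energyDensity u) := by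
  unfold energyDensity; fun_prop

@[fun_prop]
lemma contDiff_lagrangian (hu : Smooth u) : Smooth (lagrangian u) := by
  unfold lagrangian; fun_prop

lemma gradSq_nonneg (u : ℝ × Eu n → ℝ) (p : ℝ × Eu n) : 0 ≤ gradSq u p :=
  Finset.sum_nonneg fun _ _ => sq_nonneg _

lemma energyDensity_nonneg (u : ℝ × Eu n → ℝ) (p : ℝ × Eu n) : 0 ≤ energyDensity u p :=
  add_nonneg (sq_nonneg _) (gradSq_nonneg u p)

lemma dirDeriv_gradSq (hu : Smooth u) (v p : ℝ × Eu n) :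
    dirDeriv v (gradSq u) p = 2 * ∑ i, ∂ₓ[i] u p * dirDeriv v (∂ₓ[i] u) p := by
  unfold gradSq
  rw [dirDeriv_sum (fun i _ => by fun_prop), Finset.mul_sum]
  refine Finset.sum_congr rfl fun i _ => ?_
  rw [dirDeriv_pow (by fun_prop)]
  ring

lemma scalingDeriv_lagrangian (hu : Smooth u) (p : ℝ × Eu n) :
    scalingDeriv (lagrangian u) p
      = 2 * (∂ₜ u p * scalingDeriv (∂ₜ u) p - ∑ j, ∂ₓ[j] u p * scalingDeriv (∂ₓ[j] u) p) := by
  have hterm (i : Fin n) : ∂ₓ[i] (lagrangian u) p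
      = 2 * (∂ₜ u p * ∂ₓ[i] (∂ₜ u) p - ∑ j, ∂ₓ[j] u p * ∂ₓ[i] (∂ₓ[j] u) p) := by
    unfold lagrangian
    rw [dirDeriv_sub (by fun_prop) (by fun_prop), dirDeriv_pow (by fun_prop), dirDeriv_gradSq hu]
    ring
  simp only [scalingDeriv, hterm, mul_sub, Finset.mul_sum, Finset.sum_sub_distrib]
  rw [Finset.sum_comm]
  congr 1 <;> refine Finset.sum_congr rfl fun i _ => ?_
  · ring
  · exact Finset.sum_congr rfl fun j _ => by ring

lemma div_multiplierCurrent (hu : Smooth u) {M : ℝ × Eu n → ℝ} (hM : Smooth M) (p : ℝ × Eu n) :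
    ∂ₜ (fun p => ∂ₜ u p * M p) p - ∑ j, ∂ₓ[j] (fun p => ∂ₓ[j] u p * M p) p
      = waveOp u p * M p + (∂ₜ u p * ∂ₜ M p - ∑ j, ∂ₓ[j] u p * ∂ₓ[j] M p) := by
  simp only [dirDeriv_mul (differentiableAt_of_smooth (contDiff_dirDeriv hu _))
    (differentiableAt_of_smooth hM), Finset.sum_add_distrib, ← Finset.sum_mul, waveOp]
  ring

/-- The Morawetz multiplier `(ρ² + |x|²)^{-1/2} (x · ∇u + (n-1)/2 u)`. -/
def morawetzMult (ρ : ℝ) (u : ℝ × Eu n → ℝ) : ℝ × Eu n → ℝ :=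
  fun p => invBracket ρ p.2 * (scalingDeriv u p + (n - 1) / 2 * u p)

@[fun_prop]
lemma contDiff_morawetzMult (hρ : ρ ≠ 0) (hu : Smooth u) : Smooth (morawetzMult ρ u) := by
  unfold morawetzMult; fun_prop

lemma dirDeriv_morawetzMult (hρ : ρ ≠ 0) (hu : Smooth u) (v p : ℝ × Eu n) :
    dirDeriv v (morawetzMult ρ u) p
      = invBracket ρ p.2 * (∑ i, v.2 i * ∂ₓ[i] u p + scalingDeriv (dirDeriv v u) p
          + (n - 1) / 2 * dirDeriv v u p)
        - invBracket ρ p.2 ^ 3 * inner ℝ p.2 v.2 * (scalingDeriv u p + (n - 1) / 2 * u p) := by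
  unfold morawetzMult
  rw [dirDeriv_mul (by fun_prop) (by fun_prop), dirDeriv_invBracket hρ,
    dirDeriv_add (by fun_prop) (by fun_prop), dirDeriv_scalingDeriv hu,
    dirDeriv_const_mul (by fun_prop)]
  ring

lemma morawetzMult_bulk (hρ : ρ ≠ 0) (hu : Smooth u) (p : ℝ × Eu n) :
    ∂ₜ u p * ∂ₜ (morawetzMult ρ u) p - ∑ j, ∂ₓ[j] u p * ∂ₓ[j] (morawetzMult ρ u) p
      = invBracket ρ p.2 * (scalingDeriv (lagrangian u) p / 2 + (n - 1) / 2 * lagrangian u p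
          - gradSq u p)
        + invBracket ρ p.2 ^ 3 * scalingDeriv u p * (scalingDeriv u p + (n - 1) / 2 * u p) := by
  set q := invBracket ρ p.2 with hq
  have hterm (j : Fin n) : ∂ₓ[j] u p * ∂ₓ[j] (morawetzMult ρ u) p
      = q * ((n + 1) / 2 * ∂ₓ[j] u p ^ 2 + ∂ₓ[j] u p * scalingDeriv (∂ₓ[j] u) p)
        - q ^ 3 * (scalingDeriv u p + (n - 1) / 2 * u p) * (p.2 j * ∂ₓ[j] u p) := by
    rw [dirDeriv_morawetzMult hρ hu]
    simp [← hq, EuclideanSpace.inner_single_right]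
    ring
  have hspace : ∑ j, ∂ₓ[j] u p * ∂ₓ[j] (morawetzMult ρ u) p
      = q * ((n + 1) / 2 * gradSq u p + ∑ j, ∂ₓ[j] u p * scalingDeriv (∂ₓ[j] u) p)
        - q ^ 3 * (scalingDeriv u p + (n - 1) / 2 * u p) * scalingDeriv u p := by
    simp only [hterm, Finset.sum_sub_distrib, Finset.sum_add_distrib, ← Finset.mul_sum]
    rfl
  rw [hspace, dirDeriv_morawetzMult hρ hu, scalingDeriv_lagrangian hu, lagrangian]
  simp
  ring

/-- The flux of the Morawetz density `∂ₜu` times `morawetzMult ρ u`. As for every density `P` and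
flux `V` below, the sign is chosen so that the conservation law reads `∂ₜP = div V`. -/
def morawetzFlux (ρ : ℝ) (u : ℝ × Eu n → ℝ) (j : Fin n) : ℝ × Eu n → ℝ := fun p =>
  ∂ₓ[j] u p * morawetzMult ρ u p + 1 / 2 * (p.2 j * (invBracket ρ p.2 * lagrangian u p))
    + (n - 1) / 4 * (p.2 j * (invBracket ρ p.2 ^ 3 * u p ^ 2))

/-- The bulk term of the Morawetz identity, a quadratic form in `(u, u')`. -/
def morawetzBulk (ρ : ℝ) (u : ℝ × Eu n → ℝ) : ℝ × Eu n → ℝ := fun p =>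
  invBracket ρ p.2 * gradSq u p - invBracket ρ p.2 ^ 3 * scalingDeriv u p ^ 2
    + 1 / 2 * ρ ^ 2 * invBracket ρ p.2 ^ 3 * lagrangian u p
    + (n - 1) / 4 * ((n - 3) * invBracket ρ p.2 ^ 3 + 3 * ρ ^ 2 * invBracket ρ p.2 ^ 5) * u p ^ 2

@[fun_prop]
lemma contDiff_morawetzFlux (hρ : ρ ≠ 0) (hu : Smooth u) (j : Fin n) :
    Smooth (morawetzFlux ρ u j) := by
  unfold morawetzFlux; fun_prop

lemma scalingDeriv_sq (hu : Smooth u) (p : ℝ × Eu n) :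
    scalingDeriv (fun p => u p ^ 2) p = 2 * u p * scalingDeriv u p := by
  simp only [scalingDeriv, dirDeriv_pow (differentiableAt_of_smooth hu), Finset.mul_sum]
  exact Finset.sum_congr rfl fun i _ => by push_cast; ring

theorem div_morawetzCurrent (hρ : ρ ≠ 0) (hu : Smooth u) (p : ℝ × Eu n) :
    ∂ₜ (fun p => ∂ₜ u p * morawetzMult ρ u p) p - ∑ j, ∂ₓ[j] (morawetzFlux ρ u j) p
      = waveOp u p * morawetzMult ρ u p - morawetzBulk ρ u p := by
  have hflux (j : Fin n) : ∂ₓ[j] (morawetzFlux ρ u j) p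
      = ∂ₓ[j] (fun p => ∂ₓ[j] u p * morawetzMult ρ u p) p
        + 1 / 2 * ∂ₓ[j] (fun p => p.2 j * (invBracket ρ p.2 * lagrangian u p)) p
        + (n - 1) / 4 * ∂ₓ[j] (fun p => p.2 j * (invBracket ρ p.2 ^ 3 * u p ^ 2)) p := by
    unfold morawetzFlux
    rw [dirDeriv_add, dirDeriv_add, dirDeriv_const_mul, dirDeriv_const_mul]
    all_goals fun_prop
  have hlagr := sum_dirDeriv_coord_mul_invBracket_pow hρ (p := p)
    (differentiableAt_of_smooth (contDiff_lagrangian hu)) 1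
  have hzero := sum_dirDeriv_coord_mul_invBracket_pow hρ (p := p)
    (differentiableAt_of_smooth (hu.pow 2)) 3
  have hmult := div_multiplierCurrent hu (contDiff_morawetzMult hρ hu) p
  rw [morawetzMult_bulk hρ hu] at hmult
  rw [scalingDeriv_sq hu] at hzero
  simp only [pow_one] at hlagr
  simp only [hflux, Finset.sum_add_distrib, ← Finset.mul_sum, hlagr, hzero,
    morawetzBulk]
  push_cast
  linear_combination hmult

lemma scalingDeriv_sq_le (u : ℝ × Eu n → ℝ) (p : ℝ × Eu n) :
    scalingDeriv u p ^ 2 ≤ ‖p.2‖ ^ 2 * gradSq u p := by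
  rw [EuclideanSpace.real_norm_sq_eq]
  exact Finset.sum_mul_sq_le_sq_mul_sq _ _ _

lemma sq_invBracket_mul_scalingDeriv_le (hρ : ρ ≠ 0) (u : ℝ × Eu n → ℝ) (p : ℝ × Eu n) :
    (invBracket ρ p.2 * scalingDeriv u p) ^ 2 ≤ (1 - ρ ^ 2 * invBracket ρ p.2 ^ 2) * gradSq u p :=
  calc (invBracket ρ p.2 * scalingDeriv u p) ^ 2
      ≤ invBracket ρ p.2 ^ 2 * (‖p.2‖ ^ 2 * gradSq u p) := by
        rw [mul_pow]; gcongr; exact scalingDeriv_sq_le u p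
    _ = (1 - ρ ^ 2 * invBracket ρ p.2 ^ 2) * gradSq u p := by
        linear_combination gradSq u p * invBracket_sq_mul hρ p.2

lemma sq_invBracket_mul_scalingDeriv_le_gradSq (hρ : ρ ≠ 0) (u : ℝ × Eu n → ℝ) (p : ℝ × Eu n) :
    (invBracket ρ p.2 * scalingDeriv u p) ^ 2 ≤ gradSq u p :=
  (sq_invBracket_mul_scalingDeriv_le hρ u p).trans
    (mul_le_of_le_one_left (gradSq_nonneg u p) (sub_le_self _ (by positivity)))

theorem half_mul_energyDensity_le_morawetzBulk (hn : 3 ≤ n) (hρ : ρ ≠ 0) (u : ℝ × Eu n → ℝ)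
    (p : ℝ × Eu n) :
    1 / 2 * (ρ ^ 2 * invBracket ρ p.2 ^ 3 * energyDensity u p) ≤ morawetzBulk ρ u p := by
  have hn' : (3 : ℝ) ≤ n := mod_cast hn
  have hq : 0 < invBracket ρ p.2 := invBracket_pos hρ p.2
  have hangular := mul_le_mul_of_nonneg_left (sq_invBracket_mul_scalingDeriv_le hρ u p) hq.le
  have hzero : 0 ≤ (n - 1) / 4 * ((n - 3) * invBracket ρ p.2 ^ 3
      + 3 * ρ ^ 2 * invBracket ρ p.2 ^ 5) * u p ^ 2 := by
    have : (0 : ℝ) ≤ n - 3 := by linarith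
    have : (0 : ℝ) ≤ n - 1 := by linarith
    positivity
  simp only [morawetzBulk, energyDensity, lagrangian]
  linarith

lemma hardy_pointwise (hn : 2 ≤ n) (hρ : ρ ≠ 0) (hu : Smooth u) (p : ℝ × Eu n) :
    (n - 2) ^ 2 * (invBracket ρ p.2 ^ 2 * u p ^ 2)
      ≤ 4 * gradSq u p
        + 2 * (n - 2) * ∑ j, ∂ₓ[j] (fun p => p.2 j * (invBracket ρ p.2 ^ 2 * u p ^ 2)) p := by
  have hn' : (0 : ℝ) ≤ n - 2 := by linarith [show (2 : ℝ) ≤ n from mod_cast hn]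
  rw [sum_dirDeriv_coord_mul_invBracket_pow hρ (differentiableAt_of_smooth (hu.pow 2)),
    scalingDeriv_sq hu]
  set q := invBracket ρ p.2
  have hscaling := sq_invBracket_mul_scalingDeriv_le_gradSq hρ u p
  have hlower : 0 ≤ (n - 2) * (ρ ^ 2 * q ^ 4 * u p ^ 2) := by positivity
  push_cast
  linarith [sq_nonneg ((n - 2) * (q * u p) + 2 * (q * scalingDeriv u p))]

/-- The energy density augmented by the zeroth order term controlled by Hardy's inequality. -/
def hardyEnergyDensity (ρ : ℝ) (u : ℝ × Eu n → ℝ) : ℝ × Eu n → ℝ :=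
  fun p => energyDensity u p + invBracket ρ p.2 ^ 2 * u p ^ 2

lemma continuous_hardyEnergyDensity (hρ : ρ ≠ 0) (hu : Smooth u) :
    Continuous (hardyEnergyDensity ρ u) := by
  unfold hardyEnergyDensity; fun_prop

lemma energyDensity_le_hardyEnergyDensity (ρ : ℝ) (u : ℝ × Eu n → ℝ) (p : ℝ × Eu n) :
    energyDensity u p ≤ hardyEnergyDensity ρ u p :=
  le_add_of_nonneg_right (by positivity)

lemma hardyEnergyDensity_nonneg (ρ : ℝ) (u : ℝ × Eu n → ℝ) (p : ℝ × Eu n) :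
    0 ≤ hardyEnergyDensity ρ u p :=
  (energyDensity_nonneg u p).trans (energyDensity_le_hardyEnergyDensity ρ u p)

lemma sq_morawetzMult_le (hρ : ρ ≠ 0) (u : ℝ × Eu n → ℝ) (p : ℝ × Eu n) :
    morawetzMult ρ u p ^ 2 ≤ (n ^ 2 + 2) * hardyEnergyDensity ρ u p := by
  set q := invBracket ρ p.2
  have hM : morawetzMult ρ u p = q * scalingDeriv u p + (n - 1) / 2 * (q * u p) := by
    simp only [morawetzMult]; ring
  have hn : 2 * ((n - 1) / 2) ^ 2 ≤ (n : ℝ) ^ 2 + 2 := by nlinarith [n.cast_nonneg (α := ℝ)]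
  calc morawetzMult ρ u p ^ 2
      ≤ 2 * ((q * scalingDeriv u p) ^ 2 + ((n - 1) / 2 * (q * u p)) ^ 2) := hM ▸ add_sq_le
    _ = 2 * (q * scalingDeriv u p) ^ 2 + 2 * ((n - 1) / 2) ^ 2 * (q * u p) ^ 2 := by ring
    _ ≤ (n ^ 2 + 2) * energyDensity u p + (n ^ 2 + 2) * (q * u p) ^ 2 := by
        gcongr
        · exact le_add_of_nonneg_left (by positivity)
        · exact (sq_invBracket_mul_scalingDeriv_le_gradSq hρ u p).trans
            (le_add_of_nonneg_left (sq_nonneg _))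
    _ = (n ^ 2 + 2) * hardyEnergyDensity ρ u p := by rw [hardyEnergyDensity]; ring

lemma abs_mul_le_half_add_sq (a b : ℝ) : |a * b| ≤ (a ^ 2 + b ^ 2) / 2 := by
  have := two_mul_le_add_sq |a| |b|
  rw [sq_abs, sq_abs] at this
  rw [abs_mul]
  linarith

lemma abs_morawetzDensity_le (hρ : ρ ≠ 0) (u : ℝ × Eu n → ℝ) (p : ℝ × Eu n) :
    |∂ₜ u p * morawetzMult ρ u p| ≤ (n ^ 2 + 3) * hardyEnergyDensity ρ u p := by
  have hdt : ∂ₜ u p ^ 2 ≤ hardyEnergyDensity ρ u p :=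
    (le_add_of_nonneg_right (gradSq_nonneg u p)).trans (energyDensity_le_hardyEnergyDensity ρ u p)
  have hZ := mul_nonneg (sq_nonneg (n : ℝ)) (hardyEnergyDensity_nonneg ρ u p)
  linarith [abs_mul_le_half_add_sq (∂ₜ u p) (morawetzMult ρ u p), sq_morawetzMult_le hρ u p,
    hardyEnergyDensity_nonneg ρ u p]

lemma invBracket_mul_invBracket_mul_norm_sq_le {σ : ℝ} (hρ : ρ ≠ 0) (hσ : σ ≠ 0) (x : Eu n) :
    invBracket ρ x * invBracket σ x * ‖x‖ ^ 2 ≤ 1 := by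
  have hsq {r : ℝ} (hr : r ≠ 0) : (invBracket r x * ‖x‖) ^ 2 ≤ 1 := by
    linarith [invBracket_sq_mul hr x, sq_nonneg (invBracket r x * r)]
  linarith [hsq hρ, hsq hσ, two_mul_le_add_sq (invBracket ρ x * ‖x‖) (invBracket σ x * ‖x‖)]

lemma sum_coord_mul_morawetzFlux (ρ : ℝ) (u : ℝ × Eu n → ℝ) (p : ℝ × Eu n) :
    ∑ j, p.2 j * morawetzFlux ρ u j p
      = scalingDeriv u p * morawetzMult ρ u p
        + invBracket ρ p.2 * ‖p.2‖ ^ 2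
          * (1 / 2 * lagrangian u p + (n - 1) / 4 * (invBracket ρ p.2 ^ 2 * u p ^ 2)) := by
  simp only [morawetzFlux, scalingDeriv, EuclideanSpace.real_norm_sq_eq, Finset.mul_sum,
    Finset.sum_mul, ← Finset.sum_add_distrib]
  exact Finset.sum_congr rfl fun j _ => by ring

lemma neg_mul_hardyEnergyDensity_le (hρ : ρ ≠ 0) (u : ℝ × Eu n → ℝ) (p : ℝ × Eu n) :
    -((n ^ 2 + 3) * hardyEnergyDensity ρ u p)
      ≤ ∂ₜ u p * morawetzMult ρ u p
        - invBracket 1 p.2 * ∑ j, p.2 j * morawetzFlux ρ u j p := by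
  set Z := hardyEnergyDensity ρ u p
  set b := invBracket 1 p.2
  set k := invBracket ρ p.2 * b * ‖p.2‖ ^ 2
  set a := invBracket ρ p.2 ^ 2 * u p ^ 2
  have hk0 : 0 ≤ k := mul_nonneg (mul_nonneg (invBracket_pos hρ p.2).le
    (invBracket_pos one_ne_zero p.2).le) (sq_nonneg _)
  have hk1 : k ≤ 1 := invBracket_mul_invBracket_mul_norm_sq_le hρ one_ne_zero p.2
  have hZ : 0 ≤ Z := hardyEnergyDensity_nonneg ρ u p
  have haZ : a ≤ Z := le_add_of_nonneg_left (energyDensity_nonneg u p)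
  have heZ : ∂ₜ u p ^ 2 + gradSq u p ≤ Z := energyDensity_le_hardyEnergyDensity ρ u p
  have hS := gradSq_nonneg u p
  have hmult : |(∂ₜ u p - b * scalingDeriv u p) * morawetzMult ρ u p|
      ≤ Z + (n ^ 2 + 2) / 2 * Z := by
    have hradial := sq_invBracket_mul_scalingDeriv_le_gradSq one_ne_zero u p
    linarith [abs_mul_le_half_add_sq (∂ₜ u p - b * scalingDeriv u p) (morawetzMult ρ u p),
      sq_morawetzMult_le hρ u p, sq_nonneg (∂ₜ u p + b * scalingDeriv u p)]
  have hlagr : k * (1 / 2 * lagrangian u p) ≤ 1 * (1 / 2 * Z) := by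
    have hL : lagrangian u p ≤ Z := by rw [lagrangian]; linarith
    exact (mul_le_mul_of_nonneg_left (by linarith) hk0).trans
      (mul_le_mul_of_nonneg_right hk1 (by positivity))
  have hzero : (n - 1) / 4 * k * a ≤ (n ^ 2 + 1) / 8 * Z := by
    gcongr
    nlinarith [n.cast_nonneg (α := ℝ), sq_nonneg ((n : ℝ) - 1)]
  rw [sum_coord_mul_morawetzFlux]
  linarith [neg_abs_le ((∂ₜ u p - b * scalingDeriv u p) * morawetzMult ρ u p),
    mul_nonneg (sq_nonneg (n : ℝ)) hZ]

/-! ### Integrals over balls -/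

/-- The integral of `f (t, ·)` over the ball of radius `R` about the origin. -/
def ballIntegral (R : ℝ) (f : ℝ × Eu n → ℝ) (t : ℝ) : ℝ :=
  ∫ x in Metric.closedBall 0 R, f (t, x)

variable {g : ℝ × Eu n → ℝ} {R t : ℝ}

lemma integrableOn_slice_closedBall (hf : Continuous f) (R t : ℝ) :
    IntegrableOn (fun x => f (t, x)) (Metric.closedBall 0 R) := by
  have : Continuous fun x => f (t, x) := by fun_prop
  exact this.continuousOn.integrableOn_compact (isCompact_closedBall _ _)

@[fun_prop]
lemma continuous_ballIntegral (hf : Continuous f) (R : ℝ) : Continuous (ballIntegral R f) :=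
  continuous_parametric_integral_of_continuous (f := fun t x => f (t, x))
    (by simpa [Function.uncurry_def] using hf) (isCompact_closedBall _ _)

lemma ballIntegral_add (hf : Continuous f) (hg : Continuous g) (R t : ℝ) :
    ballIntegral R (fun p => f p + g p) t = ballIntegral R f t + ballIntegral R g t :=
  integral_add (integrableOn_slice_closedBall hf R t) (integrableOn_slice_closedBall hg R t)

lemma ballIntegral_sub (hf : Continuous f) (hg : Continuous g) (R t : ℝ) :
    ballIntegral R (fun p => f p - g p) t = ballIntegral R f t - ballIntegral R g t :=
  integral_sub (integrableOn_slice_closedBall hf R t) (integrableOn_slice_closedBall hg R t)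

lemma ballIntegral_sum {f : Fin n → ℝ × Eu n → ℝ} (hf : ∀ i, Continuous (f i)) (R t : ℝ) :
    ballIntegral R (fun p => ∑ i, f i p) t = ∑ i, ballIntegral R (f i) t :=
  integral_finsetSum _ fun i _ => integrableOn_slice_closedBall (hf i) R t

lemma ballIntegral_const_mul (c R : ℝ) (f : ℝ × Eu n → ℝ) (t : ℝ) :
    ballIntegral R (fun p => c * f p) t = c * ballIntegral R f t :=
  integral_const_mul c _

lemma ballIntegral_nonneg (hf : ∀ p, 0 ≤ f p) (R t : ℝ) : 0 ≤ ballIntegral R f t :=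
  integral_nonneg fun _ => hf _

lemma ballIntegral_mono (hf : Continuous f) (hg : Continuous g)
    (h : ∀ x ∈ Metric.closedBall 0 R, f (t, x) ≤ g (t, x)) :
    ballIntegral R f t ≤ ballIntegral R g t :=
  setIntegral_mono_on (integrableOn_slice_closedBall hf R t)
    (integrableOn_slice_closedBall hg R t) measurableSet_closedBall h

lemma ballIntegral_mono_radius (hf : Continuous f) (hf0 : ∀ p, 0 ≤ f p) {R' : ℝ} (h : R ≤ R') :
    ballIntegral R f t ≤ ballIntegral R' f t :=
  setIntegral_mono_set (integrableOn_slice_closedBall hf R' t) (ae_of_all _ fun _ => hf0 _)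
    (Metric.closedBall_subset_closedBall h).eventuallyLE

lemma hasFDerivAt_slice_right {x : Eu n} (hf : DifferentiableAt ℝ f (t, x)) :
    HasFDerivAt (fun x => f (t, x)) (fderiv ℝ f (t, x) ∘L .inr ℝ ℝ (Eu n)) x :=
  hf.hasFDerivAt.comp x (hasFDerivAt_prodMk_right t x)

lemma hasDerivAt_slice_left {x : Eu n} (hf : DifferentiableAt ℝ f (t, x)) :
    HasDerivAt (fun s => f (s, x)) (∂ₜ f (t, x)) t := by
  simpa [dirDeriv, Function.comp_def] using
    (hf.hasFDerivAt.comp t (hasFDerivAt_prodMk_left t x)).hasDerivAt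

lemma ballIntegral_space_deriv_eq_zero (hf : Smooth f)
    (hsupp : ∀ x, R < ‖x‖ → f (t, x) = 0) (i : Fin n) :
    ballIntegral R (∂ₓ[i] f) t = 0 := by
  set e : Eu n := EuclideanSpace.single i 1
  have hslice : Smooth fun x => f (t, x) := by fun_prop
  have hderiv (x : Eu n) : ∂ₓ[i] f (t, x) = dirDeriv e (fun x => f (t, x)) x := by
    simp [dirDeriv, (hasFDerivAt_slice_right (differentiableAt_of_smooth hf)).fderiv, e]
  have hderiv_supp (x : Eu n) (hx : R < ‖x‖) : dirDeriv e (fun x => f (t, x)) x = 0 := by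
    refine dirDeriv_eq_zero_of_eventuallyEq ?_ e
    filter_upwards [continuous_norm.isOpen_preimage _ isOpen_Ioi |>.mem_nhds hx] with y hy
    exact hsupp y hy
  have hint {h : Eu n → ℝ} (hc : Continuous h) (hh : ∀ x, R < ‖x‖ → h x = 0) : Integrable h :=
    hc.integrable_of_hasCompactSupport <|
      .intro (isCompact_closedBall 0 R) fun x hx => hh x (by simpa using hx)
  have hint_deriv := hint (contDiff_dirDeriv hslice e).continuous hderiv_supp
  have hparts := integral_mul_fderiv_eq_neg_fderiv_mul_of_integrable (μ := volume)
    (f := fun _ => (1 : ℝ)) (g := fun x => f (t, x)) (v := e) (by simp)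
    (by simpa only [one_mul] using! hint_deriv) (by simpa using hint hslice.continuous hsupp)
    (fun _ _ => by simp) (fun x _ => differentiableAt_of_smooth hslice)
  calc ballIntegral R (∂ₓ[i] f) t
      = ∫ x, dirDeriv e (fun x => f (t, x)) x := by
        simp only [ballIntegral, hderiv]
        exact setIntegral_eq_integral_of_forall_compl_eq_zero fun x hx =>
          hderiv_supp x (by simpa using hx)
    _ = 0 := by simpa [dirDeriv] using hparts

lemma integral_ballIntegral_time_deriv (hf : Smooth f) (R : ℝ) {s : ℝ} (hs : 0 ≤ s) :
    ∫ t in (0 : ℝ)..s, ballIntegral R (∂ₜ f) t = ballIntegral R f s - ballIntegral R f 0 := by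
  have hcont : Continuous (∂ₜ f) := by fun_prop
  have hint : Integrable (Function.uncurry fun t x => ∂ₜ f (t, x))
      ((volume.restrict (Ioc 0 s)).prod (volume.restrict (Metric.closedBall (0 : Eu n) R))) := by
    rw [Measure.prod_restrict]
    exact (hcont.continuousOn.integrableOn_compact (isCompact_Icc.prod
      (isCompact_closedBall _ _))).mono_set (prod_mono Ioc_subset_Icc_self le_rfl)
  rw [intervalIntegral.integral_of_le hs]
  unfold ballIntegral
  rw [integral_integral_swap hint, ← integral_sub
    (integrableOn_slice_closedBall hf.continuous R s)
    (integrableOn_slice_closedBall hf.continuous R 0)]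
  refine setIntegral_congr_fun measurableSet_closedBall fun x _ => ?_
  rw [← intervalIntegral.integral_of_le hs]
  exact intervalIntegral.integral_eq_sub_of_hasDerivAt
    (fun t _ => hasDerivAt_slice_left (differentiableAt_of_smooth hf))
    (Continuous.intervalIntegrable (by fun_prop) _ _)

theorem ballIntegral_sub_eq_integral_divergence {P : ℝ × Eu n → ℝ} {V : Fin n → ℝ × Eu n → ℝ}
    (hP : Smooth P) (hV : ∀ i, Smooth (V i)) {s : ℝ} (hs : 0 ≤ s)
    (hsupp : ∀ i, ∀ t, 0 ≤ t → ∀ x, R < ‖x‖ → V i (t, x) = 0) :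
    ballIntegral R P s - ballIntegral R P 0
      = ∫ t in (0 : ℝ)..s, ballIntegral R (fun p => ∂ₜ P p - ∑ i, ∂ₓ[i] (V i) p) t := by
  rw [← integral_ballIntegral_time_deriv hP R hs]
  refine intervalIntegral.integral_congr fun t ht => ?_
  rw [uIcc_of_le hs] at ht
  beta_reduce
  rw [ballIntegral_sub (by fun_prop) (by fun_prop), ballIntegral_sum (fun i => by fun_prop),
    Finset.sum_eq_zero fun i _ => ballIntegral_space_deriv_eq_zero (hV i) (hsupp i t ht.1) i,
    sub_zero]

lemma hardy_ballIntegral_le (hn : 2 ≤ n) (hρ : ρ ≠ 0) (hu : Smooth u)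
    (hsupp : ∀ x, R < ‖x‖ → u (t, x) = 0) :
    (n - 2) ^ 2 * ballIntegral R (fun p => invBracket ρ p.2 ^ 2 * u p ^ 2) t
      ≤ 4 * ballIntegral R (gradSq u) t := by
  set V : Fin n → ℝ × Eu n → ℝ := fun j p => p.2 j * (invBracket ρ p.2 ^ 2 * u p ^ 2)
  have hV (j : Fin n) : Smooth (V j) := by fun_prop
  have hdiv : ballIntegral R (fun p => ∑ j, ∂ₓ[j] (V j) p) t = 0 := by
    rw [ballIntegral_sum fun j => by fun_prop]
    exact Finset.sum_eq_zero fun j _ =>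
      ballIntegral_space_deriv_eq_zero (hV j) (fun x hx => by simp [V, hsupp x hx]) j
  rw [← ballIntegral_const_mul]
  calc ballIntegral R (fun p => (n - 2) ^ 2 * (invBracket ρ p.2 ^ 2 * u p ^ 2)) t
      ≤ ballIntegral R (fun p => 4 * gradSq u p + 2 * (n - 2) * ∑ j, ∂ₓ[j] (V j) p) t :=
        ballIntegral_mono (by fun_prop) (by fun_prop)
          fun x _ => hardy_pointwise hn hρ hu (t, x)
    _ = 4 * ballIntegral R (gradSq u) t := by
        rw [ballIntegral_add (by fun_prop) (by fun_prop), ballIntegral_const_mul,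
          ballIntegral_const_mul, hdiv, mul_zero, add_zero]

lemma ballIntegral_hardyEnergyDensity_le (hn : 3 ≤ n) (hρ : ρ ≠ 0) (hu : Smooth u) {A : ℝ}
    (hsupp : ∃ R, ∀ x, R < ‖x‖ → u (t, x) = 0)
    (hA : ∀ R, ballIntegral R (energyDensity u) t ≤ A) (R : ℝ) :
    ballIntegral R (hardyEnergyDensity ρ u) t ≤ 5 * A := by
  obtain ⟨R₀, hR₀⟩ := hsupp
  set R₁ := max R R₀
  have hhardy := hardy_ballIntegral_le (by omega) hρ hu fun x hx =>
    hR₀ x ((le_max_right R R₀).trans_lt hx)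
  have hzero := ballIntegral_nonneg (f := fun p => invBracket ρ p.2 ^ 2 * u p ^ 2)
    (fun p => by positivity) R₁ t
  have hgrad : ballIntegral R₁ (gradSq u) t ≤ ballIntegral R₁ (energyDensity u) t :=
    ballIntegral_mono (by fun_prop) (by fun_prop) fun x _ => le_add_of_nonneg_left (sq_nonneg _)
  have hn1 : (1 : ℝ) ≤ (n - 2) ^ 2 := by
    have : (3 : ℝ) ≤ n := mod_cast hn
    nlinarith
  calc ballIntegral R (hardyEnergyDensity ρ u) t
      ≤ ballIntegral R₁ (hardyEnergyDensity ρ u) t :=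
        ballIntegral_mono_radius (continuous_hardyEnergyDensity hρ hu)
          (hardyEnergyDensity_nonneg ρ u) (le_max_left _ _)
    _ = ballIntegral R₁ (energyDensity u) t
          + ballIntegral R₁ (fun p => invBracket ρ p.2 ^ 2 * u p ^ 2) t :=
        ballIntegral_add (by fun_prop) (by fun_prop) R₁ t
    _ ≤ 5 * A := by
        linarith [hA R₁, mul_le_mul_of_nonneg_right hn1 hzero]

/-- The `L²` norm of `f (t, ·)` over the ball of radius `R` about the origin. -/
def ballNorm (R : ℝ) (f : ℝ × Eu n → ℝ) (t : ℝ) : ℝ := √(ballIntegral R (fun p => f p ^ 2) t)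

@[fun_prop]
lemma continuous_ballNorm (hf : Continuous f) (R : ℝ) : Continuous (ballNorm R f) := by
  unfold ballNorm; fun_prop

lemma ballNorm_nonneg (R : ℝ) (f : ℝ × Eu n → ℝ) (t : ℝ) : 0 ≤ ballNorm R f t := sqrt_nonneg _

lemma ballIntegral_mul_le_ballNorm_mul (hf : Continuous f) (hg : Continuous g) (R t : ℝ) :
    ballIntegral R (fun p => f p * g p) t ≤ ballNorm R f t * ballNorm R g t := by
  have hquad (s : ℝ) : 0 ≤ ballIntegral R (fun p => f p ^ 2) t * (s * s)
      + -2 * ballIntegral R (fun p => f p * g p) t * s + ballIntegral R (fun p => g p ^ 2) t := by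
    calc 0 ≤ ballIntegral R (fun p => (s * f p - g p) ^ 2) t :=
          ballIntegral_nonneg (fun _ => sq_nonneg _) R t
      _ = ballIntegral R (fun p => s * s * f p ^ 2 + -2 * s * (f p * g p) + g p ^ 2) t := by
          congr 1 with p
          ring
      _ = _ := by
          rw [ballIntegral_add (by fun_prop) (by fun_prop),
            ballIntegral_add (by fun_prop) (by fun_prop), ballIntegral_const_mul,
            ballIntegral_const_mul]
          ring
  have hdiscrim := discrim_le_zero hquad
  rw [discrim] at hdiscrim
  rw [ballNorm, ballNorm, ← sqrt_mul (ballIntegral_nonneg (fun _ => sq_nonneg _) R t)]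
  exact le_sqrt_of_sq_le (by linarith)

lemma hasFDerivAt_jap (x : Eu n) : HasFDerivAt jap (invBracket 1 x • innerSL ℝ x) x := by
  simpa [jap, Function.comp_def] using! hasFDerivAt_sqrt_sq_add_norm_sq one_ne_zero x

@[fun_prop]
lemma contDiff_jap : Smooth (jap : Eu n → ℝ) :=
  (contDiff_const.add (contDiff_norm_sq ℝ)).sqrt fun x => by positivity

lemma one_le_jap (x : Eu n) : 1 ≤ jap x := one_le_sqrt.2 (by linarith [sq_nonneg ‖x‖])

lemma norm_lt_jap (x : Eu n) : ‖x‖ < jap x := lt_sqrt_of_sq_lt (by linarith)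

lemma jap_le_one_add_norm (x : Eu n) : jap x ≤ 1 + ‖x‖ :=
  sqrt_le_iff.2 ⟨by positivity, by nlinarith [norm_nonneg x]⟩

/-! ### Cutoff to the backward cone and the energy inequality -/

/-- A cutoff to a neighbourhood of the truncated cone `{⟨x⟩ + t ≤ R}`. -/
def cutoff (R : ℝ) (p : ℝ × Eu n) : ℝ := smoothTransition (2 - (jap p.2 + p.1) / R)

/-- Minus the derivative of the cutoff with respect to `⟨x⟩ + t`. -/
def cutoffSlope (R : ℝ) (p : ℝ × Eu n) : ℝ :=
  deriv smoothTransition (2 - (jap p.2 + p.1) / R) / R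

@[fun_prop]
lemma contDiff_cutoff (R : ℝ) : Smooth (cutoff R : ℝ × Eu n → ℝ) :=
  smoothTransition.contDiff.comp (by fun_prop)

lemma continuous_deriv_smoothTransition : Continuous (deriv smoothTransition) :=
  (smoothTransition.contDiff (n := 1)).continuous_deriv le_rfl

@[fun_prop]
lemma continuous_cutoffSlope (R : ℝ) : Continuous (cutoffSlope R : ℝ × Eu n → ℝ) :=
  (continuous_deriv_smoothTransition.comp (by fun_prop)).div_const R

lemma dirDeriv_cutoff (R : ℝ) (v p : ℝ × Eu n) :
    dirDeriv v (cutoff R) p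
      = -(cutoffSlope R p * (v.1 + invBracket 1 p.2 * inner ℝ p.2 v.2)) := by
  have harg : HasFDerivAt (fun p : ℝ × Eu n => 2 - (jap p.2 + p.1) / R) _ p :=
    ((((hasFDerivAt_jap p.2).comp p hasFDerivAt_snd).add hasFDerivAt_fst).mul_const R⁻¹).const_sub 2
  have hst : HasDerivAt smoothTransition _ (2 - (jap p.2 + p.1) / R) :=
    ((smoothTransition.contDiff (n := 1)).differentiable one_ne_zero _).hasDerivAt
  have := congrArg (fun L => L v) (hst.comp_hasFDerivAt p harg).fderiv
  simp only [dirDeriv, cutoffSlope]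
  refine this.trans ?_
  simp
  ring

lemma cutoff_nonneg (R : ℝ) (p : ℝ × Eu n) : 0 ≤ cutoff R p := smoothTransition.nonneg _

lemma cutoff_le_one (R : ℝ) (p : ℝ × Eu n) : cutoff R p ≤ 1 := smoothTransition.le_one _

lemma cutoff_eq_one (hR : 0 < R) {p : ℝ × Eu n} (hp : jap p.2 + p.1 ≤ R) : cutoff R p = 1 :=
  smoothTransition.one_of_one_le (by linarith [(div_le_one hR).2 hp])

lemma cutoff_eq_zero (hR : 0 < R) {p : ℝ × Eu n} (ht : 0 ≤ p.1) (hp : 2 * R < ‖p.2‖) :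
    cutoff R p = 0 := by
  refine smoothTransition.zero_of_nonpos (sub_nonpos.2 ((le_div_iff₀ hR).2 ?_))
  linarith [norm_lt_jap p.2]

lemma cutoffSlope_nonneg (hR : 0 < R) (p : ℝ × Eu n) : 0 ≤ cutoffSlope R p :=
  div_nonneg smoothTransition.monotone.deriv_nonneg hR.le

lemma exists_deriv_smoothTransition_le : ∃ c, ∀ y, deriv smoothTransition y ≤ c := by
  have hsupp : HasCompactSupport (deriv smoothTransition) := by
    refine .intro (isCompact_Icc (a := 0) (b := 1)) fun y hy => ?_
    rcases lt_or_gt_of_ne (show y ≠ 0 by rintro rfl; simp at hy) with hneg | hpos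
    · refine IsLocalMin.deriv_eq_zero (.of_forall fun z => ?_)
      simpa [smoothTransition.zero_of_nonpos hneg.le] using smoothTransition.nonneg z
    · have hone : 1 ≤ y := (lt_of_not_ge fun h => hy ⟨hpos.le, h⟩).le
      refine IsLocalMax.deriv_eq_zero (.of_forall fun z => ?_)
      simpa [smoothTransition.one_of_one_le hone] using smoothTransition.le_one z
  obtain ⟨c, hc⟩ := hsupp.exists_bound_of_continuous continuous_deriv_smoothTransition
  exact ⟨c, fun y => (le_abs_self _).trans (hc y)⟩

theorem ballIntegral_cutoff_mul_sub_eq (hR : 0 < R) {P : ℝ × Eu n → ℝ} {V : Fin n → ℝ × Eu n → ℝ}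
    (hP : Smooth P) (hV : ∀ j, Smooth (V j)) {s : ℝ} (hs : 0 ≤ s) :
    ballIntegral (2 * R) (fun p => cutoff R p * P p) s
        - ballIntegral (2 * R) (fun p => cutoff R p * P p) 0
      = ∫ t in (0 : ℝ)..s, ballIntegral (2 * R) (fun p =>
          cutoff R p * (∂ₜ P p - ∑ j, ∂ₓ[j] (V j) p)
            - cutoffSlope R p * (P p - invBracket 1 p.2 * ∑ j, p.2 j * V j p)) t := by
  rw [ballIntegral_sub_eq_integral_divergence (P := fun p => cutoff R p * P p)
    (V := fun j p => cutoff R p * V j p) (by fun_prop) (fun j => by fun_prop) hs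
    fun j t ht x hx => by simp [cutoff_eq_zero hR (p := (t, x)) ht hx]]
  congr 1 with t
  congr 1 with p
  have htime : ∂ₜ (fun p => cutoff R p * P p) p = cutoff R p * ∂ₜ P p - cutoffSlope R p * P p := by
    rw [dirDeriv_mul (by fun_prop) (by fun_prop), dirDeriv_cutoff, inner_zero_right]
    ring
  have hspace (j : Fin n) : ∂ₓ[j] (fun p => cutoff R p * V j p) p
      = cutoff R p * ∂ₓ[j] (V j) p
        - cutoffSlope R p * (invBracket 1 p.2 * (p.2 j * V j p)) := by
    rw [dirDeriv_mul (by fun_prop) (by fun_prop), dirDeriv_cutoff,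
      EuclideanSpace.inner_single_right]
    simp
    ring
  simp only [htime, hspace, Finset.sum_sub_distrib, ← Finset.mul_sum]
  ring

lemma div_energyCurrent (hu : Smooth u) (p : ℝ × Eu n) :
    ∂ₜ (energyDensity u) p - ∑ j, ∂ₓ[j] (fun p => 2 * (∂ₜ u p * ∂ₓ[j] u p)) p
      = 2 * (∂ₜ u p * waveOp u p) := by
  have hflux (j : Fin n) : ∂ₓ[j] (fun p => 2 * (∂ₜ u p * ∂ₓ[j] u p)) p
      = 2 * (∂ₓ[j] u p * ∂ₜ (∂ₓ[j] u) p) + 2 * (∂ₜ u p * ∂ₓ[j] (∂ₓ[j] u) p) := by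
    rw [dirDeriv_const_mul (by fun_prop), dirDeriv_mul (by fun_prop) (by fun_prop),
      dirDeriv_comm hu]
    ring
  unfold energyDensity
  rw [dirDeriv_add (by fun_prop) (by fun_prop), dirDeriv_pow (by fun_prop), dirDeriv_gradSq hu]
  simp only [hflux, Finset.sum_add_distrib, ← Finset.mul_sum, waveOp]
  push_cast
  ring

lemma energyFlux_nonneg (u : ℝ × Eu n → ℝ) (p : ℝ × Eu n) :
    0 ≤ energyDensity u p
      - invBracket 1 p.2 * ∑ j, p.2 j * (2 * (∂ₜ u p * ∂ₓ[j] u p)) := by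
  have hsum : ∑ j, p.2 j * (2 * (∂ₜ u p * ∂ₓ[j] u p)) = 2 * ∂ₜ u p * scalingDeriv u p := by
    rw [scalingDeriv, Finset.mul_sum]
    exact Finset.sum_congr rfl fun j _ => by ring
  rw [hsum, energyDensity]
  linarith [sq_invBracket_mul_scalingDeriv_le_gradSq one_ne_zero u p,
    sq_nonneg (∂ₜ u p - invBracket 1 p.2 * scalingDeriv u p)]

lemma ballIntegral_cutoff_mul_source_le (hu : Smooth u) (R r t : ℝ) :
    ballIntegral r (fun p => cutoff R p * (∂ₜ u p * waveOp u p)) t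
      ≤ √(ballIntegral r (fun p => cutoff R p * energyDensity u p) t)
        * ballNorm r (waveOp u) t := by
  have hsq (p : ℝ × Eu n) : √(cutoff R p) ^ 2 = cutoff R p := sq_sqrt (cutoff_nonneg R p)
  calc ballIntegral r (fun p => cutoff R p * (∂ₜ u p * waveOp u p)) t
      = ballIntegral r (fun p => (√(cutoff R p) * ∂ₜ u p) * (√(cutoff R p) * waveOp u p)) t := by
        congr 1 with p
        rw [mul_mul_mul_comm, mul_self_sqrt (cutoff_nonneg R p)]
    _ ≤ ballNorm r (fun p => √(cutoff R p) * ∂ₜ u p) t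
          * ballNorm r (fun p => √(cutoff R p) * waveOp u p) t :=
        ballIntegral_mul_le_ballNorm_mul (by fun_prop) (by fun_prop) _ _
    _ ≤ _ := by
        simp only [ballNorm, mul_pow, hsq]
        gcongr
        · refine ballIntegral_mono (by fun_prop) (by fun_prop) fun x _ => ?_
          exact mul_le_mul_of_nonneg_left (le_add_of_nonneg_right (gradSq_nonneg u _))
            (cutoff_nonneg R _)
        · refine ballIntegral_mono (by fun_prop) (by fun_prop) fun x _ => ?_
          exact mul_le_of_le_one_left (sq_nonneg _) (cutoff_le_one R _)

lemma ballIntegral_cutoff_mul_energyDensity_sub_le (hu : Smooth u) (hR : 0 < R) {s : ℝ}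
    (hs : 0 ≤ s) :
    ballIntegral (2 * R) (fun p => cutoff R p * energyDensity u p) s
        - ballIntegral (2 * R) (fun p => cutoff R p * energyDensity u p) 0
      ≤ ∫ t in (0 : ℝ)..s, 2 * √(ballIntegral (2 * R) (fun p => cutoff R p * energyDensity u p) t)
          * ballNorm (2 * R) (waveOp u) t := by
  rw [ballIntegral_cutoff_mul_sub_eq hR (contDiff_energyDensity hu)
    (V := fun j p => 2 * (∂ₜ u p * ∂ₓ[j] u p)) (fun j => by fun_prop) hs]
  refine intervalIntegral.integral_mono_on hs
    (Continuous.intervalIntegrable (by fun_prop (disch := simp)) _ _)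
    (Continuous.intervalIntegrable (by fun_prop) _ _) fun t _ => ?_
  simp only [div_energyCurrent hu]
  calc _ ≤ ballIntegral (2 * R) (fun p => 2 * (cutoff R p * (∂ₜ u p * waveOp u p))) t :=
        ballIntegral_mono (by fun_prop (disch := simp)) (by fun_prop) fun x _ => by
          linarith [mul_nonneg (cutoffSlope_nonneg hR (t, x)) (energyFlux_nonneg u (t, x))]
    _ ≤ _ := by
        rw [ballIntegral_const_mul, mul_assoc]
        gcongr
        exact ballIntegral_cutoff_mul_source_le hu R (2 * R) t

/-- A Grönwall inequality for quadratic energies: evaluate the hypothesis at the maximum of `E`. -/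
lemma sqrt_le_of_le_sq_add_integral {E g : ℝ → ℝ} {a T : ℝ} (hE : Continuous E)
    (hE0 : ∀ s, 0 ≤ E s) (hg : Continuous g) (hg0 : ∀ s, 0 ≤ g s) (ha : 0 ≤ a)
    (h : ∀ s ∈ Icc 0 T, E s ≤ a ^ 2 + ∫ τ in (0 : ℝ)..s, 2 * √(E τ) * g τ) (ht : t ∈ Icc 0 T) :
    √(E t) ≤ a + 2 * ∫ τ in (0 : ℝ)..T, g τ := by
  obtain ⟨s, hs, hmax⟩ := isCompact_Icc.exists_isMaxOn ⟨t, ht⟩ hE.continuousOn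
  set N := ∫ τ in (0 : ℝ)..T, g τ
  set m := √(E s)
  have : 0 ≤ m := sqrt_nonneg _
  have hm : m ^ 2 ≤ a ^ 2 + 2 * m * N := by
    calc m ^ 2 = E s := sq_sqrt (hE0 s)
      _ ≤ a ^ 2 + ∫ τ in (0 : ℝ)..s, 2 * √(E τ) * g τ := h s hs
      _ ≤ a ^ 2 + ∫ τ in (0 : ℝ)..s, 2 * m * g τ := by
          gcongr
          refine intervalIntegral.integral_mono_on hs.1
            (Continuous.intervalIntegrable (by fun_prop) _ _)
            (Continuous.intervalIntegrable (by fun_prop) _ _) fun τ hτ => ?_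
          have := sqrt_le_sqrt (hmax ⟨hτ.1, hτ.2.trans hs.2⟩ : E τ ≤ E s)
          have := hg0 τ
          gcongr
      _ ≤ a ^ 2 + 2 * m * N := by
          rw [intervalIntegral.integral_const_mul]
          gcongr
          exact intervalIntegral.integral_mono_interval le_rfl hs.1 hs.2 (ae_of_all _ hg0)
            (hg.intervalIntegrable _ _)
  refine (sqrt_le_sqrt (hmax ht)).trans ?_
  have hN : 0 ≤ N := intervalIntegral.integral_nonneg (ht.1.trans ht.2) fun τ _ => hg0 τ
  by_contra! hlt
  nlinarith [mul_nonneg ha (by linarith : 0 ≤ m - a)]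

lemma ballIntegral_le_ballIntegral_cutoff_mul (hf : Continuous f) (hf0 : ∀ p, 0 ≤ f p) {R' : ℝ}
    (ht : 0 ≤ t) (hR : 1 + |R| + t ≤ R') :
    ballIntegral R f t ≤ ballIntegral (2 * R') (fun p => cutoff R' p * f p) t := by
  have hR' : 0 < R' := by linarith [abs_nonneg R]
  calc ballIntegral R f t ≤ ballIntegral R (fun p => cutoff R' p * f p) t :=
        ballIntegral_mono hf (by fun_prop) fun x hx => by
          have hx' : ‖x‖ ≤ R := by simpa using hx
          rw [cutoff_eq_one hR' (by linarith [jap_le_one_add_norm x, le_abs_self R]), one_mul]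
    _ ≤ _ := ballIntegral_mono_radius (by fun_prop)
        (fun p => mul_nonneg (cutoff_nonneg R' p) (hf0 p)) (by linarith [le_abs_self R])

theorem ballIntegral_energyDensity_le (hu : Smooth u) {a N T : ℝ} (ha : 0 ≤ a)
    (hdata : ∀ R, ballIntegral R (energyDensity u) 0 ≤ a ^ 2)
    (hsource : ∀ R, ∫ t in (0 : ℝ)..T, ballNorm R (waveOp u) t ≤ N) (ht : t ∈ Icc 0 T) (R : ℝ) :
    ballIntegral R (energyDensity u) t ≤ (a + 2 * N) ^ 2 := by
  set R' := 1 + |R| + t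
  have hR' : 0 < R' := by linarith [abs_nonneg R, ht.1]
  set E := ballIntegral (2 * R') fun p => cutoff R' p * energyDensity u p
  have hE0 (s : ℝ) : 0 ≤ E s :=
    ballIntegral_nonneg (fun p => mul_nonneg (cutoff_nonneg R' p) (energyDensity_nonneg u p)) _ s
  have hinit : E 0 ≤ a ^ 2 := (ballIntegral_mono (by fun_prop) (by fun_prop) fun x _ =>
    mul_le_of_le_one_left (energyDensity_nonneg u _) (cutoff_le_one R' _)).trans (hdata (2 * R'))
  have hgronwall := sqrt_le_of_le_sq_add_integral (by fun_prop) hE0 (by fun_prop)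
    (ballNorm_nonneg (2 * R') (waveOp u)) ha
    (fun s hs => by linarith [ballIntegral_cutoff_mul_energyDensity_sub_le hu hR' hs.1]) ht
  calc ballIntegral R (energyDensity u) t ≤ E t :=
        ballIntegral_le_ballIntegral_cutoff_mul (by fun_prop) (energyDensity_nonneg u) ht.1 le_rfl
    _ = √(E t) ^ 2 := (sq_sqrt (hE0 t)).symm
    _ ≤ (a + 2 * N) ^ 2 := by
        gcongr
        linarith [hsource (2 * R')]

/-! ### The estimate at a fixed scale -/

/-- The energy density localized to `|x| ≲ ρ`. -/
def localEnergyDensity (ρ : ℝ) (u : ℝ × Eu n → ℝ) : ℝ × Eu n → ℝ :=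
  fun p => ρ ^ 2 * invBracket ρ p.2 ^ 3 * energyDensity u p

lemma continuous_localEnergyDensity (hρ : ρ ≠ 0) (hu : Smooth u) :
    Continuous (localEnergyDensity ρ u) := by
  unfold localEnergyDensity; fun_prop

lemma localEnergyDensity_nonneg (ρ : ℝ) (u : ℝ × Eu n → ℝ) (p : ℝ × Eu n) :
    0 ≤ localEnergyDensity ρ u p := by
  have := energyDensity_nonneg u p
  unfold localEnergyDensity invBracket
  positivity

lemma ballIntegral_waveOp_mul_cutoff_mul_morawetzMult_le (hρ : ρ ≠ 0) (hu : Smooth u)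
    (R r t : ℝ) :
    ballIntegral r (fun p => waveOp u p * (cutoff R p * morawetzMult ρ u p)) t
      ≤ √((n ^ 2 + 3) * ballIntegral r (hardyEnergyDensity ρ u) t) * ballNorm r (waveOp u) t := by
  have hZ := continuous_hardyEnergyDensity hρ hu
  have hmult : ballIntegral r (fun p => (cutoff R p * morawetzMult ρ u p) ^ 2) t
      ≤ (n ^ 2 + 3) * ballIntegral r (hardyEnergyDensity ρ u) t := by
    rw [← ballIntegral_const_mul]
    refine ballIntegral_mono (by fun_prop) (by fun_prop) fun x _ => ?_
    rw [mul_pow]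
    calc _ ≤ 1 * morawetzMult ρ u (t, x) ^ 2 := by
          gcongr
          exact pow_le_one₀ (cutoff_nonneg R _) (cutoff_le_one R _)
      _ ≤ _ := by
          linarith [sq_morawetzMult_le hρ u (t, x), hardyEnergyDensity_nonneg ρ u (t, x)]
  rw [mul_comm (√_)]
  refine (ballIntegral_mul_le_ballNorm_mul (by fun_prop) (by fun_prop)
    r t).trans ?_
  exact mul_le_mul_of_nonneg_left (sqrt_le_sqrt hmult) (ballNorm_nonneg _ _ _)

lemma ballIntegral_cutoff_mul_div_morawetzCurrent_le (hn : 3 ≤ n) (hρ : ρ ≠ 0) (hu : Smooth u)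
    (hR : 0 < R) {c : ℝ} (hc : ∀ y, deriv smoothTransition y ≤ c) (t : ℝ) :
    ballIntegral (2 * R) (fun p =>
        cutoff R p * (∂ₜ (fun p => ∂ₜ u p * morawetzMult ρ u p) p
          - ∑ j, ∂ₓ[j] (morawetzFlux ρ u j) p)
        - cutoffSlope R p * (∂ₜ u p * morawetzMult ρ u p
          - invBracket 1 p.2 * ∑ j, p.2 j * morawetzFlux ρ u j p)) t
      ≤ √((n ^ 2 + 3) * ballIntegral (2 * R) (hardyEnergyDensity ρ u) t)
            * ballNorm (2 * R) (waveOp u) t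
          + c / R * ((n ^ 2 + 3) * ballIntegral (2 * R) (hardyEnergyDensity ρ u) t)
          - 1 / 2 * ballIntegral (2 * R) (fun p => cutoff R p * localEnergyDensity ρ u p) t := by
  have hZ := continuous_hardyEnergyDensity hρ hu
  have hL := continuous_localEnergyDensity hρ hu
  have hq : Smooth (invBracket 1 : Eu n → ℝ) := contDiff_invBracket one_ne_zero
  refine le_trans ?_ (sub_le_sub_right (add_le_add_left
    (ballIntegral_waveOp_mul_cutoff_mul_morawetzMult_le hρ hu R (2 * R) t) _) _)
  rw [← ballIntegral_const_mul, ← ballIntegral_const_mul, ← ballIntegral_const_mul,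
    ← ballIntegral_add (by fun_prop) (by fun_prop), ← ballIntegral_sub (by fun_prop) (by fun_prop)]
  refine ballIntegral_mono (by fun_prop) (by fun_prop) fun x _ => ?_
  rw [div_morawetzCurrent hρ hu]
  have hbulk := mul_le_mul_of_nonneg_left
    (half_mul_energyDensity_le_morawetzBulk hn hρ u (t, x)) (cutoff_nonneg R (t, x))
  have hflux := mul_le_mul_of_nonneg_left
    (neg_mul_hardyEnergyDensity_le hρ u (t, x)) (cutoffSlope_nonneg hR (t, x))
  have hslope : cutoffSlope R (t, x) * ((n ^ 2 + 3) * hardyEnergyDensity ρ u (t, x))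
      ≤ c / R * ((n ^ 2 + 3) * hardyEnergyDensity ρ u (t, x)) :=
    mul_le_mul_of_nonneg_right (div_le_div_of_nonneg_right (hc _) hR.le)
      (mul_nonneg (by positivity) (hardyEnergyDensity_nonneg ρ u _))
  simp only [localEnergyDensity]
  linarith

lemma abs_ballIntegral_cutoff_mul_morawetzDensity_le (hρ : ρ ≠ 0) (hu : Smooth u) (R r t : ℝ) :
    |ballIntegral r (fun p => cutoff R p * (∂ₜ u p * morawetzMult ρ u p)) t|
      ≤ (n ^ 2 + 3) * ballIntegral r (hardyEnergyDensity ρ u) t := by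
  have hZ := continuous_hardyEnergyDensity hρ hu
  rw [← ballIntegral_const_mul]
  refine abs_integral_le_integral_abs.trans
    (ballIntegral_mono (f := fun p => |cutoff R p * (∂ₜ u p * morawetzMult ρ u p)|)
      (by fun_prop) (by fun_prop) fun x _ => ?_)
  rw [abs_mul, abs_of_nonneg (cutoff_nonneg R _)]
  exact (mul_le_of_le_one_left (abs_nonneg _) (cutoff_le_one R _)).trans
    (abs_morawetzDensity_le hρ u (t, x))

theorem integral_ballIntegral_cutoff_mul_localEnergyDensity_le (hn : 3 ≤ n) (hρ : ρ ≠ 0)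
    (hu : Smooth u) (hR : 0 < R) {c : ℝ} (hc : ∀ y, deriv smoothTransition y ≤ c) {T D : ℝ}
    (hT : 0 ≤ T)
    (hD : ∀ t ∈ Icc 0 T, (n ^ 2 + 3) * ballIntegral (2 * R) (hardyEnergyDensity ρ u) t ≤ D) :
    ∫ t in (0 : ℝ)..T, ballIntegral (2 * R) (fun p => cutoff R p * localEnergyDensity ρ u p) t
      ≤ 4 * D + 2 * √D * (∫ t in (0 : ℝ)..T, ballNorm (2 * R) (waveOp u) t)
        + 2 * (c * T / R * D) := by
  have hL := continuous_localEnergyDensity hρ hu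
  have hV (j : Fin n) := contDiff_morawetzFlux hρ hu j
  have hq : Smooth (invBracket 1 : Eu n → ℝ) := contDiff_invBracket one_ne_zero
  have hdensity (t : ℝ) (ht : t ∈ Icc 0 T) := abs_le.1
    ((abs_ballIntegral_cutoff_mul_morawetzDensity_le hρ hu R (2 * R) t).trans (hD t ht))
  have hc0 : 0 ≤ c := smoothTransition.monotone.deriv_nonneg.trans (hc 0)
  have hflow := ballIntegral_cutoff_mul_sub_eq hR (P := fun p => ∂ₜ u p * morawetzMult ρ u p)
    (V := morawetzFlux ρ u) (by fun_prop) hV hT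
  have hbound : _ ≤ ∫ t in (0 : ℝ)..T, (√D * ballNorm (2 * R) (waveOp u) t + c / R * D
      - 1 / 2 * ballIntegral (2 * R) (fun p => cutoff R p * localEnergyDensity ρ u p) t) :=
    intervalIntegral.integral_mono_on hT (Continuous.intervalIntegrable (by fun_prop) _ _)
      (Continuous.intervalIntegrable (by fun_prop) _ _) fun t ht =>
      (ballIntegral_cutoff_mul_div_morawetzCurrent_le hn hρ hu hR hc t).trans <| by
        have := hD t ht
        have := ballNorm_nonneg (2 * R) (waveOp u) t
        gcongr
  rw [← hflow, intervalIntegral.integral_sub, intervalIntegral.integral_add,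
    intervalIntegral.integral_const_mul, intervalIntegral.integral_const_mul,
    intervalIntegral.integral_const_mul, intervalIntegral.integral_const] at hbound
  · have : c / R * ((T - 0) • D) = c * T / R * D := by rw [sub_zero, smul_eq_mul]; ring
    linarith [(hdensity 0 ⟨le_rfl, hT⟩).2, (hdensity T ⟨hT, le_rfl⟩).1]
  all_goals exact Continuous.intervalIntegrable (by fun_prop) _ _

theorem integral_ballIntegral_localEnergyDensity_le (hn : 3 ≤ n) (hρ : ρ ≠ 0) (hu : Smooth u)
    {T B : ℝ} (hT : 0 ≤ T) (hsupp : ∀ t ∈ Icc 0 T, ∃ R, ∀ x, R < ‖x‖ → u (t, x) = 0)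
    (hB : 0 ≤ B) (henergy : ∀ t ∈ Icc 0 T, ∀ R, ballIntegral R (energyDensity u) t ≤ B ^ 2)
    (hsource : ∀ R, ∫ t in (0 : ℝ)..T, ballNorm R (waveOp u) t ≤ B) (R : ℝ) :
    ∫ t in (0 : ℝ)..T, ballIntegral R (localEnergyDensity ρ u) t ≤ 40 * (n ^ 2 + 3) * B ^ 2 := by
  obtain ⟨c, hc⟩ := exists_deriv_smoothTransition_le
  have hc0 : 0 ≤ c := smoothTransition.monotone.deriv_nonneg.trans (hc 0)
  set R' := 1 + |R| + T + c * T
  have hR'0 : 0 < R' := by positivity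
  set D : ℝ := 5 * (n ^ 2 + 3) * B ^ 2 with hDdef
  have hL := continuous_localEnergyDensity hρ hu
  have hD (t : ℝ) (ht : t ∈ Icc 0 T) :
      (n ^ 2 + 3) * ballIntegral (2 * R') (hardyEnergyDensity ρ u) t ≤ D := by
    have := ballIntegral_hardyEnergyDensity_le hn hρ hu (hsupp t ht) (henergy t ht) (2 * R')
    calc _ ≤ (n ^ 2 + 3) * (5 * B ^ 2) := by gcongr
      _ = D := by ring
  have hsqrt : √D ≤ 5 * (n ^ 2 + 3) * B := by
    refine sqrt_le_iff.2 ⟨by positivity, ?_⟩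
    have : (1 : ℝ) ≤ 5 * (n ^ 2 + 3) := by linarith [sq_nonneg (n : ℝ)]
    calc D ≤ (5 * (n ^ 2 + 3)) ^ 2 * B ^ 2 := by
          rw [hDdef]
          gcongr
          exact le_self_pow₀ this two_ne_zero
      _ = _ := (mul_pow _ _ _).symm
  have hsmall : c * T / R' ≤ 1 := (div_le_one hR'0).2 (by linarith [abs_nonneg R])
  calc ∫ t in (0 : ℝ)..T, ballIntegral R (localEnergyDensity ρ u) t
      ≤ ∫ t in (0 : ℝ)..T,
          ballIntegral (2 * R') (fun p => cutoff R' p * localEnergyDensity ρ u p) t :=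
        intervalIntegral.integral_mono_on hT (Continuous.intervalIntegrable (by fun_prop) _ _)
          (Continuous.intervalIntegrable (by fun_prop) _ _) fun t ht =>
          ballIntegral_le_ballIntegral_cutoff_mul hL (localEnergyDensity_nonneg ρ u) ht.1
            (by linarith [ht.2, mul_nonneg hc0 hT])
    _ ≤ _ := integral_ballIntegral_cutoff_mul_localEnergyDensity_le hn hρ hu hR'0 hc hT hD
    _ ≤ 4 * D + 2 * (5 * (n ^ 2 + 3) * B) * B + 2 * (1 * D) := by
        have := mul_le_mul hsqrt (hsource (2 * R'))
          (intervalIntegral.integral_nonneg hT fun t _ => ballNorm_nonneg _ _ t) (by positivity)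
        have := mul_le_mul_of_nonneg_right hsmall (by positivity : 0 ≤ D)
        linarith
    _ = 40 * (n ^ 2 + 3) * B ^ 2 := by ring

/-! ### Summation over the dyadic scales -/

lemma jap_rpow_le (x : Eu n) {δ : ℝ} (hδ : 0 ≤ δ) (hρ : 0 < ρ) (hle : ρ ≤ jap x)
    (hlt : jap x < 2 * ρ) :
    jap x ^ (-1 - 2 * δ) ≤ 27 * ρ ^ (-2 * δ) * (ρ ^ 2 * invBracket ρ x ^ 3) := by
  have hq := invBracket_pos hρ.ne' x
  have hnorm : ‖x‖ ^ 2 ≤ 4 * ρ ^ 2 := by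
    nlinarith [norm_lt_jap x, norm_nonneg x]
  have hscale : 1 ≤ 3 * (ρ * invBracket ρ x) := by
    refine (one_le_sq_iff₀ (by positivity)).1 ?_
    nlinarith [invBracket_sq_mul hρ.ne' x, sq_nonneg (ρ * invBracket ρ x),
      mul_le_mul_of_nonneg_left hnorm (sq_nonneg (invBracket ρ x))]
  calc jap x ^ (-1 - 2 * δ) ≤ ρ ^ (-1 - 2 * δ) :=
        rpow_le_rpow_of_nonpos hρ hle (by linarith)
    _ = ρ⁻¹ * ρ ^ (-2 * δ) := by
        rw [← rpow_neg_one, ← rpow_add hρ]; ring_nf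
    _ ≤ ρ⁻¹ * ρ ^ (-2 * δ) * (3 * (ρ * invBracket ρ x)) ^ 3 :=
        le_mul_of_one_le_right (by positivity) (one_le_pow₀ hscale)
    _ = 27 * ρ ^ (-2 * δ) * (ρ ^ 2 * invBracket ρ x ^ 3) := by
        field_simp; norm_num

lemma exists_nat_jap_rpow_le (x : Eu n) {δ : ℝ} (hδ : 0 ≤ δ) :
    ∃ k : ℕ, jap x ^ (-1 - 2 * δ)
      ≤ 27 * ((2 : ℝ) ^ (-2 * δ)) ^ k * ((2 ^ k) ^ 2 * invBracket (2 ^ k) x ^ 3) := by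
  obtain ⟨k, hle, hlt⟩ := exists_nat_pow_near (one_le_jap x) one_lt_two
  refine ⟨k, ?_⟩
  rw [← rpow_mul_natCast zero_le_two, mul_comm _ (k : ℝ), rpow_natCast_mul zero_le_two]
  exact jap_rpow_le x hδ (by positivity) hle (by rwa [pow_succ'] at hlt)

theorem lintegral_jap_rpow_mul_energyDensity_le (hu : Smooth u) {δ : ℝ} (hδ : 0 < δ)
    {μ : Measure (ℝ × Eu n)} {K : ℝ≥0∞}
    (hK : ∀ ρ, 0 < ρ → ∫⁻ p, .ofReal (localEnergyDensity ρ u p) ∂μ ≤ K) :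
    ∫⁻ p, .ofReal (jap p.2 ^ (-1 - 2 * δ) * energyDensity u p) ∂μ
      ≤ .ofReal (27 * (1 - 2 ^ (-2 * δ))⁻¹) * K := by
  have hr : (2 : ℝ) ^ (-2 * δ) < 1 := rpow_lt_one_of_one_lt_of_neg one_lt_two (by linarith)
  set r : ℝ := 2 ^ (-2 * δ)
  have hr0 : 0 ≤ r := by positivity
  have hmeas (k : ℕ) : Measurable fun p => ENNReal.ofReal (localEnergyDensity (2 ^ k) u p) :=
    (continuous_localEnergyDensity (by positivity) hu).measurable.ennreal_ofReal
  have hgeom := (hasSum_geometric_of_lt_one hr0 hr).mul_left 27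
  calc ∫⁻ p, .ofReal (jap p.2 ^ (-1 - 2 * δ) * energyDensity u p) ∂μ
      ≤ ∫⁻ p, ∑' k : ℕ, .ofReal (27 * r ^ k) * .ofReal (localEnergyDensity (2 ^ k) u p) ∂μ := by
        refine lintegral_mono fun p => ?_
        obtain ⟨k, hk⟩ := exists_nat_jap_rpow_le p.2 hδ.le
        refine le_trans ?_ (ENNReal.le_tsum k)
        rw [← ENNReal.ofReal_mul (by positivity), localEnergyDensity, ← mul_assoc]
        exact ENNReal.ofReal_le_ofReal (mul_le_mul_of_nonneg_right hk (energyDensity_nonneg u p))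
    _ = ∑' k : ℕ, .ofReal (27 * r ^ k) * ∫⁻ p, .ofReal (localEnergyDensity (2 ^ k) u p) ∂μ := by
        rw [lintegral_tsum fun k => ((hmeas k).const_mul _).aemeasurable]
        simp only [lintegral_const_mul _ (hmeas _)]
    _ ≤ ∑' k : ℕ, .ofReal (27 * r ^ k) * K := by
        gcongr with k
        exact hK _ (by positivity)
    _ = _ := by
        rw [ENNReal.tsum_mul_right, ← ENNReal.ofReal_tsum_of_nonneg (fun k => by positivity)
          hgeom.summable, hgeom.tsum_eq]

lemma td_eq_dirDeriv (hf : Smooth f) : td (fun t x => f (t, x)) = fun t x => ∂ₜ f (t, x) := by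
  ext t x
  exact (hasDerivAt_slice_left (differentiableAt_of_smooth hf)).deriv

lemma sd_eq_dirDeriv (hf : Smooth f) (i : Fin n) (t : ℝ) :
    sd i (fun x => f (t, x)) = fun x => ∂ₓ[i] f (t, x) := by
  ext x
  simp [sd, dirDeriv, (hasFDerivAt_slice_right (differentiableAt_of_smooth hf)).fderiv]

lemma dAlembert_eq_waveOp (hu : Smooth u) (t : ℝ) (x : Eu n) :
    dAlembert (fun t x => u (t, x)) t x = waveOp u (t, x) := by
  have hderiv (v : ℝ × Eu n) : Smooth (dirDeriv v u) := contDiff_dirDeriv hu v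
  simp only [dAlembert, waveOp, td_eq_dirDeriv hu, td_eq_dirDeriv (hderiv _),
    sd_eq_dirDeriv hu, sd_eq_dirDeriv (hderiv _)]

lemma gradMag_eq_sqrt_energyDensity (hu : Smooth u) (t : ℝ) (x : Eu n) :
    gradMag (fun t x => u (t, x)) t x = √(energyDensity u (t, x)) := by
  simp [gradMag, energyDensity, gradSq, Fin.sum_univ_succ, pd, td_eq_dirDeriv hu,
    sd_eq_dirDeriv hu]

lemma eLpNorm_two_sq_eq_lintegral {α : Type*} [MeasurableSpace α] (μ : Measure α) (h : α → ℝ) :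
    eLpNorm h 2 μ ^ 2 = ∫⁻ x, .ofReal (h x ^ 2) ∂μ := by
  have := eLpNorm_nnreal_pow_eq_lintegral (μ := μ) (f := h) (p := 2) two_ne_zero
  simpa [Real.enorm_eq_ofReal_abs, ← ENNReal.ofReal_pow] using this

lemma ofReal_ballIntegral (hf : Continuous f) (hf0 : ∀ p, 0 ≤ f p) (R t : ℝ) :
    ENNReal.ofReal (ballIntegral R f t) = ∫⁻ x in Metric.closedBall 0 R, .ofReal (f (t, x)) :=
  ofReal_integral_eq_lintegral_ofReal (integrableOn_slice_closedBall hf R t)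
    (ae_of_all _ fun _ => hf0 _)

lemma ofReal_intervalIntegral {h : ℝ → ℝ} (hh : Continuous h) (hh0 : ∀ t, 0 ≤ h t) {T : ℝ}
    (hT : 0 ≤ T) :
    ENNReal.ofReal (∫ t in (0 : ℝ)..T, h t) = ∫⁻ t in Icc 0 T, .ofReal (h t) := by
  rw [intervalIntegral.integral_of_le hT, ← integral_Icc_eq_integral_Ioc]
  exact ofReal_integral_eq_lintegral_ofReal
    (hh.continuousOn.integrableOn_compact isCompact_Icc) (ae_of_all _ hh0)

lemma ofReal_ballNorm_le_L2x (hf : Continuous f) (R t : ℝ) :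
    ENNReal.ofReal (ballNorm R f t) ≤ L2x univ fun x => f (t, x) := by
  rw [← ENNReal.pow_le_pow_left_iff two_ne_zero, ← ENNReal.ofReal_pow (ballNorm_nonneg _ _ _),
    ballNorm, sq_sqrt (ballIntegral_nonneg (fun _ => sq_nonneg _) R t),
    ofReal_ballIntegral (by fun_prop) (fun _ => sq_nonneg _), L2x, eLpNorm_two_sq_eq_lintegral,
    Measure.restrict_univ]
  exact setLIntegral_le_lintegral _ _

lemma ofReal_integral_ballNorm_le (hf : Continuous f) {T : ℝ} (hT : 0 ≤ T) (R : ℝ) :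
    ENNReal.ofReal (∫ t in (0 : ℝ)..T, ballNorm R f t)
      ≤ ∫⁻ t in Icc 0 T, L2x univ fun x => f (t, x) := by
  rw [ofReal_intervalIntegral (by fun_prop) (ballNorm_nonneg R f) hT]
  exact lintegral_mono fun t => ofReal_ballNorm_le_L2x hf R t

lemma lintegral_Icc_prod_le_of_ballIntegral_le (hf : Continuous f) (hf0 : ∀ p, 0 ≤ f p)
    {T c : ℝ} (hT : 0 ≤ T) (hc : ∀ R, ∫ t in (0 : ℝ)..T, ballIntegral R f t ≤ c) :
    ∫⁻ p, .ofReal (f p) ∂(volume.restrict (Icc 0 T)).prod (volume.restrict univ)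
      ≤ ENNReal.ofReal c := by
  have hball : (univ : Set (ℝ × Eu n)) = ⋃ k : ℕ, univ ×ˢ Metric.closedBall 0 k := by
    rw [← prod_iUnion, Metric.iUnion_closedBall_nat, univ_prod_univ]
  rw [Measure.restrict_univ, ← setLIntegral_univ, hball, setLIntegral_iUnion_of_directed]
  · refine iSup_le fun k => ?_
    rw [← Measure.prod_restrict, Measure.restrict_univ, lintegral_prod _ (by fun_prop)]
    simp only [← ofReal_ballIntegral hf hf0]
    rw [← ofReal_intervalIntegral (by fun_prop) (ballIntegral_nonneg hf0 _) hT]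
    exact ENNReal.ofReal_le_ofReal (hc k)
  · exact Monotone.directed_le fun k l hkl =>
      prod_mono le_rfl (Metric.closedBall_subset_closedBall (by exact_mod_cast hkl))

theorem lintegral_localEnergyDensity_le (hn : 3 ≤ n) (hρ : ρ ≠ 0) (hu : Smooth u) {T : ℝ}
    (hT : 0 ≤ T) (hsupp : ∀ t ∈ Icc 0 T, ∃ R, ∀ x, R < ‖x‖ → u (t, x) = 0) :
    ∫⁻ p, .ofReal (localEnergyDensity ρ u p)
        ∂(volume.restrict (Icc 0 T)).prod (volume.restrict univ)
      ≤ .ofReal (160 * (n ^ 2 + 3)) * (L2x univ (fun x => √(energyDensity u (0, x)))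
          + ∫⁻ t in Icc 0 T, L2x univ fun x => waveOp u (t, x)) ^ 2 := by
  set A := L2x univ fun x => √(energyDensity u (0, x))
  set M := ∫⁻ t in Icc 0 T, L2x univ fun x => waveOp u (t, x)
  by_cases htop : A + M = ∞
  · rw [htop, ENNReal.top_pow two_ne_zero,
      ENNReal.mul_top (ENNReal.ofReal_pos.2 (by positivity)).ne']
    exact le_top
  obtain ⟨hAtop, hMtop⟩ := ENNReal.add_ne_top.1 htop
  obtain ⟨a, ha0, ha⟩ : ∃ a ≥ 0, A = .ofReal a :=
    ⟨A.toReal, ENNReal.toReal_nonneg, (ENNReal.ofReal_toReal hAtop).symm⟩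
  obtain ⟨N, hN0, hN⟩ : ∃ N ≥ 0, M = .ofReal N :=
    ⟨M.toReal, ENNReal.toReal_nonneg, (ENNReal.ofReal_toReal hMtop).symm⟩
  have hdata (R : ℝ) : ballIntegral R (energyDensity u) 0 ≤ a ^ 2 := by
    have hcont : Continuous fun p => √(energyDensity u p) := by fun_prop
    have := (ENNReal.ofReal_le_ofReal_iff ha0).1
      ((ofReal_ballNorm_le_L2x hcont R 0).trans_eq ha)
    simpa only [ballNorm, sq_sqrt (energyDensity_nonneg u _), sqrt_le_left ha0] using this
  have hsource (R : ℝ) : ∫ t in (0 : ℝ)..T, ballNorm R (waveOp u) t ≤ N :=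
    (ENNReal.ofReal_le_ofReal_iff hN0).1
      ((ofReal_integral_ballNorm_le (by fun_prop) hT R).trans_eq hN)
  have henergy (t : ℝ) (ht : t ∈ Icc 0 T) (R : ℝ) :
      ballIntegral R (energyDensity u) t ≤ (2 * (a + N)) ^ 2 :=
    (ballIntegral_energyDensity_le hu ha0 hdata hsource ht R).trans (by gcongr; linarith)
  rw [ha, hN, ← ENNReal.ofReal_add ha0 hN0, ← ENNReal.ofReal_pow (by positivity),
    ← ENNReal.ofReal_mul (by positivity)]
  refine lintegral_Icc_prod_le_of_ballIntegral_le (continuous_localEnergyDensity hρ hu)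
    (localEnergyDensity_nonneg ρ u) hT fun R => ?_
  calc _ ≤ 40 * (n ^ 2 + 3) * (2 * (a + N)) ^ 2 :=
        integral_ballIntegral_localEnergyDensity_le hn hρ hu hT hsupp (by positivity) henergy
          (fun R => (hsource R).trans (by linarith)) R
    _ = 160 * (n ^ 2 + 3) * (a + N) ^ 2 := by ring

lemma sq_jap_rpow_mul_sqrt (x : Eu n) (δ : ℝ) {e : ℝ} (he : 0 ≤ e) :
    (jap x ^ (-(1 / 2 : ℝ) - δ) * √e) ^ 2 = jap x ^ (-1 - 2 * δ) * e := by
  rw [mul_pow, sq_sqrt he, ← rpow_mul_natCast (zero_le_one.trans (one_le_jap x))]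
  congr 2
  push_cast
  ring

end SpaceTime

/-- Localized energy estimate in ℝ₊ × ℝⁿ, n ≥ 3. -/
theorem localized_energy_estimate (n : ℕ) (hn : 3 ≤ n) (δ : ℝ) (hδ : 0 < δ) :
    ∃ C : ℝ, 0 < C ∧ ∀ (w F : ℝ → Eu n → ℝ), SmoothTX w →
      (∀ t : ℝ, 0 ≤ t → ∀ x, dAlembert w t x = F t x) →
      (∀ t : ℝ, ∃ R : ℝ, ∀ x : Eu n, R < ‖x‖ → w t x = 0) →
      ∀ T : ℝ, 0 < T →
        L2st T univ (fun t x => jap x ^ (-(1/2 : ℝ) - δ) * gradMag w t x)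
          ≤ ENNReal.ofReal C *
            (L2x univ (fun x => gradMag w 0 x)
              + ∫⁻ s in Icc (0 : ℝ) T, L2x univ (fun x => dAlembert w s x)) := by
  have hr : 0 < 1 - (2 : ℝ) ^ (-2 * δ) :=
    sub_pos.2 (rpow_lt_one_of_one_lt_of_neg one_lt_two (by linarith))
  refine ⟨√(27 * (1 - 2 ^ (-2 * δ))⁻¹ * (160 * (n ^ 2 + 3))), by positivity,
    fun w F hw _ hsupp T hT => ?_⟩
  obtain ⟨u, rfl⟩ : ∃ u : ℝ × Eu n → ℝ, w = fun t x => u (t, x) := ⟨fun p => w p.1 p.2, rfl⟩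
  have hu : ContDiff ℝ (⊤ : ℕ∞) u := hw
  rw [← ENNReal.pow_le_pow_left_iff two_ne_zero, L2st, eLpNorm_two_sq_eq_lintegral, mul_pow,
    ← ENNReal.ofReal_pow (sqrt_nonneg _), sq_sqrt (by positivity),
    ENNReal.ofReal_mul (by positivity), mul_assoc]
  simp only [gradMag_eq_sqrt_energyDensity hu, dAlembert_eq_waveOp hu,
    sq_jap_rpow_mul_sqrt _ δ (energyDensity_nonneg u _)]
  exact lintegral_jap_rpow_mul_energyDensity_le hu hδ fun ρ hρ =>
    lintegral_localEnergyDensity_le hn hρ.ne' hu hT.le fun t _ => hsupp t
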